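/- Let m be a positive half-integer. For τ in the upper half-plane and z1, z2 ∈ ℂ such that neither 2z1 nor 2z2 lies in ℤ + ℤ·(2τ), the following identity holds: θ_{0,2m+1}(τ, (−1/2 + 2m(z1−z2))/(2m+1)) · Φ^{[m,1/2]}(2τ, 2z1, 2z2, 0) = −i η(2τ)³ { θ_{0,2m+1}(τ, (1/2+z1−z2)/(2m+1) + z1+z2) / ϑ_{11}(2τ, 2z1) + θ_{0,2m+1}(τ, (1/2+z1−z2)/(2m+1) − z1−z2) / ϑ_{11}(2τ, 2z2) } + Σ_{j=1}^∞ Σ_{r=1}^{j} Σ_{k odd, 1≤k≤2m−1} (−1)^j q^{(2m+1)j² − (4m(j−r)+k)²/(8m)} { e^{πi(4mr−k)(z1−z2)} + e^{−πi(4mr−k)(z1−z2)} } [θ_{k,2m} − θ_{−k,2m}](τ, z1+z2) − Σ_{j=1}^∞ Σ_{r=0}^{j−1} Σ_{k odd, 1≤k≤2m−1} (−1)^j q^{(2m+1)j² − (4m(j−r)−k)²/(8m)} { e^{πi(4mr+k)(z1−z2)} + e^{−πi(4mr+k)(z1−z2)} } [θ_{k,2m} − θ_{−k,2m}](τ, z1+z2).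 -/

import Mathlib

open Complex

noncomputable section

namespace Wakimoto

/-- `qpow τ x = e^{2πiτx}`, i.e. `q^x` where `q = e^{2πiτ}`. -/
def qpow (τ x : ℂ) : ℂ := Complex.exp (2 * Real.pi * Complex.I * τ * x)

/-- `e2 z = e^{2πiz}`. -/
def e2 (z : ℂ) : ℂ := Complex.exp (2 * Real.pi * Complex.I * z)

/-- The mock theta function `Φ^{[m,s]}_1`. -/
def Phi1 (m s : ℂ) (τ z1 z2 t : ℂ) : ℂ :=
  Complex.exp (-(2 * Real.pi * Complex.I) * m * t) *
    ∑' j : ℤ,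
      Complex.exp (2 * Real.pi * Complex.I * (m * (j : ℂ) * (z1 + z2) + s * z1)) *
          qpow τ (m * (j : ℂ) ^ 2 + s * (j : ℂ)) /
        (1 - e2 z1 * qpow τ (j : ℂ))

/-- The mock theta function `Φ^{[m,s]}_2`. -/
def Phi2 (m s : ℂ) (τ z1 z2 t : ℂ) : ℂ :=
  Complex.exp (-(2 * Real.pi * Complex.I) * m * t) *
    ∑' j : ℤ,
      Complex.exp (-(2 * Real.pi * Complex.I) * (m * (j : ℂ) * (z1 + z2) + s * z2)) *
          qpow τ (m * (j : ℂ) ^ 2 + s * (j : ℂ)) /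
        (1 - e2 (-z2) * qpow τ (j : ℂ))

/-- `Φ^{[m,s]} = Φ^{[m,s]}_1 - Φ^{[m,s]}_2`. -/
def Phi (m s : ℂ) (τ z1 z2 t : ℂ) : ℂ :=
  Phi1 m s τ z1 z2 t - Phi2 m s τ z1 z2 t

/-- Jacobi's theta function `θ_{k,m}`. -/
def jTheta (k m : ℂ) (τ z : ℂ) : ℂ :=
  ∑' j : ℤ,
    Complex.exp (2 * Real.pi * Complex.I * (m * ((j : ℂ) + k / (2 * m)) * z)) *
      qpow τ (m * ((j : ℂ) + k / (2 * m)) ^ 2)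

/-- The signed theta function `θ^{(-)}_{k,m}`. -/
def jThetaM (k m : ℂ) (τ z : ℂ) : ℂ :=
  ∑' j : ℤ,
    (-1 : ℂ) ^ j *
      Complex.exp (2 * Real.pi * Complex.I * (m * ((j : ℂ) + k / (2 * m)) * z)) *
      qpow τ (m * ((j : ℂ) + k / (2 * m)) ^ 2)

/-- The Dedekind eta function. -/
def eta (τ : ℂ) : ℂ := qpow τ (1 / 24) * ∏' n : ℕ, (1 - qpow τ ((n : ℂ) + 1))

/-- The Mumford theta functions `ϑ_{ab}`. -/
def mumford (a b : ℕ) (τ z : ℂ) : ℂ :=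
  ∑' n : ℤ,
    Complex.exp (Real.pi * Complex.I * τ * ((n : ℂ) + (a : ℂ) / 2) ^ 2 +
      2 * Real.pi * Complex.I * ((n : ℂ) + (a : ℂ) / 2) * (z + (b : ℂ) / 2))

/-- `z` lies in the lattice `ℤ + ℤτ`. -/
def InLattice (τ z : ℂ) : Prop := ∃ a b : ℤ, z = (a : ℂ) + (b : ℂ) * τ

/-!
In the multiplicative variables `q = e^{2πiτ}`, `x = e^{2πiz₁}`, `y = e^{2πiz₂}`, the product of the
theta function with either half of `Φ` is a double series over a row index `l`, whose general term
carries the factor `w^{2Ml} · w / (1 - w²)` with `M = 2m` and `w = x q^{p+l}`. Write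
`w^{2Ml} = 1 + (w^{2Ml} - 1)`.

The summand `1` decouples the double series into a theta function times the Appell–Lerch sum
`A(x) = ∑ (-1)ⁿ q^{n²} f(x qⁿ)`, `f(w) = w / (1 - w²)`, by the quasi-periodicity of `A`. Multiplying
`A` by `ϑ₁₁` and summing by columns shows that `A · ϑ₁₁` does not depend on `x`; its value is
Jacobi's `∑ (2l + 1) (-1)^l q^{l² + l} = (∏ (1 - q^{2n}))³`, which is obtained from the finite form
of the triple product.

In the remaining summand the denominator `1 - w²` cancels, leaving a finite geometric sum in each
row. Adding the rows `l` and `-l` and exchanging `x` and `y` gives the theta corrections, indexed by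
an odd frequency `0 < e < 2Mj`. Writing `e = 2Mr ± k` with `0 < k < M` yields the two correction
sums, since the terms at the centres `e ≡ M` modulo `2M` vanish.
-/

section GaussianSums

lemma summable_abs_pow_mul_zpow_mul_zpow_sq {r t : ℝ} (hr0 : 0 < r) (hr1 : r < 1) (ht : 0 < t)
    (k : ℕ) : Summable fun n : ℤ ↦ |(n : ℝ)| ^ k * (t ^ n * r ^ (n ^ 2)) := by
  have hlog : 0 < -Real.log r / Real.pi :=
    div_pos (neg_pos.2 (Real.log_neg hr0 hr1)) Real.pi_pos
  refine Summable.of_nonneg_of_le (fun n ↦ by positivity) (fun n ↦ ?_)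
    (summable_pow_mul_jacobiTheta₂_term_bound (|Real.log t| / (2 * Real.pi)) hlog k)
  rw [Int.cast_abs]
  refine mul_le_mul_of_nonneg_left ?_ (by positivity)
  rw [← Real.rpow_intCast, ← Real.rpow_intCast, Real.rpow_def_of_pos ht,
    Real.rpow_def_of_pos hr0, ← Real.exp_add, Real.exp_le_exp]
  calc Real.log t * n + Real.log r * ((n ^ 2 : ℤ) : ℝ)
      ≤ |Real.log t| * |(n : ℝ)| + Real.log r * n ^ 2 := by
        push_cast
        gcongr ?_ + _
        exact (le_abs_self _).trans_eq (abs_mul _ _)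
    _ = _ := by
        field_simp
        ring

lemma summable_norm_zpow_mul_zpow_mul_sq {q x : ℂ} (hq0 : q ≠ 0) (hq1 : ‖q‖ < 1) (hx : x ≠ 0)
    {d : ℕ} (hd : d ≠ 0) : Summable fun n : ℤ ↦ ‖x ^ n * q ^ ((d : ℤ) * n ^ 2)‖ := by
  have h := summable_abs_pow_mul_zpow_mul_zpow_sq (pow_pos (norm_pos_iff.2 hq0) d)
    (pow_lt_one₀ (norm_nonneg q) hq1 hd) (norm_pos_iff.2 hx) 0
  simpa [zpow_mul] using h

lemma summable_norm_zpow_mul_zpow_sq {q x : ℂ} (hq0 : q ≠ 0) (hq1 : ‖q‖ < 1) (hx : x ≠ 0) :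
    Summable fun n : ℤ ↦ ‖x ^ n * q ^ (n ^ 2)‖ := by
  simpa using summable_norm_zpow_mul_zpow_mul_sq hq0 hq1 hx one_ne_zero

end GaussianSums

section QPochhammer

variable {Q : ℂ}

/-- The `q`-Pochhammer symbol `(Q; Q)_n = ∏_{i = 1}^n (1 - Q^i)`. -/
def qPochhammer (Q : ℂ) (n : ℕ) : ℂ := ∏ i ∈ Finset.range n, (1 - Q ^ (i + 1))

/-- The reciprocal `1 / (Q; Q)_k`, extended by `0` to negative `k`: this convention makes the
recurrence in `k` hold on all of `ℤ`, and cuts off the finite theta expansions. -/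
def invQPochhammer (Q : ℂ) (k : ℤ) : ℂ := if 0 ≤ k then (qPochhammer Q k.toNat)⁻¹ else 0

/-- Euler's product `(Q; Q)_∞ = ∏_{i ≥ 1} (1 - Q^i)`, i.e. `η` without its prefactor. -/
def eulerProduct (Q : ℂ) : ℂ := ∏' n : ℕ, (1 - Q ^ (n + 1))

lemma qPochhammer_succ (Q : ℂ) (n : ℕ) :
    qPochhammer Q (n + 1) = qPochhammer Q n * (1 - Q ^ (n + 1)) :=
  Finset.prod_range_succ _ n

lemma one_sub_pow_succ_ne_zero (hQ : ‖Q‖ < 1) (n : ℕ) : 1 - Q ^ (n + 1) ≠ 0 := by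
  refine sub_ne_zero.2 fun h ↦ ?_
  have hlt : ‖Q ^ (n + 1)‖ < 1 := by
    rw [norm_pow]
    exact pow_lt_one₀ (norm_nonneg Q) hQ n.succ_ne_zero
  simp [← h] at hlt

lemma qPochhammer_ne_zero (hQ : ‖Q‖ < 1) (n : ℕ) : qPochhammer Q n ≠ 0 :=
  Finset.prod_ne_zero_iff.2 fun i _ ↦ one_sub_pow_succ_ne_zero hQ i

lemma invQPochhammer_of_neg (Q : ℂ) {k : ℤ} (hk : k < 0) : invQPochhammer Q k = 0 :=
  if_neg hk.not_ge

lemma invQPochhammer_natCast (Q : ℂ) (n : ℕ) : invQPochhammer Q n = (qPochhammer Q n)⁻¹ := by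
  simp [invQPochhammer]

lemma invQPochhammer_sub_one (hQ : ‖Q‖ < 1) (k : ℤ) :
    invQPochhammer Q (k - 1) = (1 - Q ^ k) * invQPochhammer Q k := by
  rcases lt_trichotomy k 0 with hk | rfl | hk
  · rw [invQPochhammer_of_neg Q hk, invQPochhammer_of_neg Q (by lia), mul_zero]
  · rw [invQPochhammer_of_neg Q (by lia), zpow_zero, sub_self, zero_mul]
  · obtain ⟨n, rfl⟩ : ∃ n : ℕ, k = (n + 1 : ℕ) := ⟨(k - 1).toNat, by lia⟩
    rw [Nat.cast_succ, add_sub_cancel_right, ← Nat.cast_succ, invQPochhammer_natCast,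
      invQPochhammer_natCast, zpow_natCast, qPochhammer_succ]
    have := qPochhammer_ne_zero hQ n
    have := one_sub_pow_succ_ne_zero hQ n
    field_simp

lemma tendsto_qPochhammer (hQ : ‖Q‖ < 1) :
    Filter.Tendsto (qPochhammer Q) Filter.atTop (nhds (eulerProduct Q)) :=
  (ModularForm.multipliable_one_sub_pow hQ).tendsto_prod_tprod_nat

lemma eulerProduct_ne_zero (hQ : ‖Q‖ < 1) : eulerProduct Q ≠ 0 := by
  simp only [eulerProduct, sub_eq_add_neg]
  refine tprod_one_add_ne_zero_of_summable (f := fun n : ℕ ↦ -Q ^ (n + 1)) (fun n ↦ ?_) ?_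
  · simpa only [← sub_eq_add_neg] using one_sub_pow_succ_ne_zero hQ n
  · simp only [norm_neg, norm_pow]
    exact (summable_nat_add_iff 1).2 (summable_geometric_of_lt_one (norm_nonneg Q) hQ)

lemma tendsto_invQPochhammer_add (hQ : ‖Q‖ < 1) (d : ℤ) :
    Filter.Tendsto (fun n : ℕ ↦ invQPochhammer Q (n + d)) Filter.atTop
      (nhds (eulerProduct Q)⁻¹) := by
  have hshift : Filter.Tendsto (fun n : ℕ ↦ ((n : ℤ) + d).toNat) Filter.atTop Filter.atTop :=
    Filter.tendsto_atTop_mono (fun n ↦ by lia) (Filter.tendsto_sub_atTop_nat d.natAbs)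
  refine (((tendsto_qPochhammer hQ).inv₀ (eulerProduct_ne_zero hQ)).comp hshift).congr' ?_
  filter_upwards [Filter.eventually_ge_atTop d.natAbs] with n hn
  exact (if_pos (by lia)).symm

lemma exists_norm_qPochhammer_le (hQ : ‖Q‖ < 1) : ∃ K : ℝ, ∀ n, ‖qPochhammer Q n‖ ≤ K := by
  obtain ⟨K, hK⟩ := (tendsto_qPochhammer hQ).norm.bddAbove_range
  exact ⟨K, fun n ↦ hK ⟨n, rfl⟩⟩

lemma exists_norm_invQPochhammer_le (hQ : ‖Q‖ < 1) :
    ∃ K : ℝ, ∀ k, ‖invQPochhammer Q k‖ ≤ K := by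
  obtain ⟨K, hK⟩ :=
    ((tendsto_qPochhammer hQ).inv₀ (eulerProduct_ne_zero hQ)).norm.bddAbove_range
  have hbound (n : ℕ) : ‖(qPochhammer Q n)⁻¹‖ ≤ K := hK ⟨n, rfl⟩
  refine ⟨K, fun k ↦ ?_⟩
  unfold invQPochhammer
  split_ifs
  · exact hbound _
  · simpa using (norm_nonneg _).trans (hbound 0)

end QPochhammer

section Jacobi

variable {q : ℂ}

/-- The coefficient `(-1)^l q^{l² + l}` of `x^{2l+1}` in the odd Jacobi theta function. -/
def thetaCoeff (q : ℂ) (l : ℤ) : ℂ := (-1) ^ l * q ^ (l ^ 2 + l)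

/-- The coefficient of `x^{2l+1}` in `(x - x⁻¹) ∏_{k=1}^n (1 - q^{2k} x²) (1 - q^{2k} x⁻²)`,
as given by the finite form of the Jacobi triple product. -/
def finiteThetaCoeff (q : ℂ) (n : ℕ) (l : ℤ) : ℂ :=
  thetaCoeff q l * (qPochhammer (q ^ 2) (2 * n + 1) *
    invQPochhammer (q ^ 2) (n - l) * invQPochhammer (q ^ 2) (n + l + 1))

lemma norm_sq_lt_one (hq1 : ‖q‖ < 1) : ‖q ^ 2‖ < 1 := by
  rw [norm_pow]
  exact pow_lt_one₀ (norm_nonneg q) hq1 two_ne_zero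

lemma thetaCoeff_add (hq0 : q ≠ 0) (l k : ℤ) :
    thetaCoeff q (l + k) = (-1) ^ k * q ^ (k ^ 2) * (q ^ k) ^ (2 * l + 1) * thetaCoeff q l := by
  have hexp : (l + k) ^ 2 + (l + k) = k ^ 2 + k * (2 * l + 1) + (l ^ 2 + l) := by ring
  rw [thetaCoeff, thetaCoeff, hexp, zpow_add₀ (by norm_num), zpow_add₀ hq0, zpow_add₀ hq0,
    zpow_mul]
  ring

lemma thetaCoeff_neg_sub_one (q : ℂ) (l : ℤ) : thetaCoeff q (-l - 1) = -thetaCoeff q l := by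
  rw [thetaCoeff, thetaCoeff, show (-l - 1) ^ 2 + (-l - 1) = l ^ 2 + l by ring,
    zpow_sub₀ (by norm_num), zpow_neg, zpow_one]
  rcases Int.even_or_odd l with h | h <;> simp [h.neg_one_zpow]

lemma finiteThetaCoeff_eq_zero {n : ℕ} {l : ℤ} (hl : l ∉ Set.Icc (-(n + 1) : ℤ) n) :
    finiteThetaCoeff q n l = 0 := by
  have : (n : ℤ) - l < 0 ∨ (n : ℤ) + l + 1 < 0 := by
    rw [Set.mem_Icc] at hl
    lia
  rcases this with h | h <;> simp [finiteThetaCoeff, invQPochhammer_of_neg _ h]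

lemma hasFiniteSupport_finiteThetaCoeff (q : ℂ) (n : ℕ) :
    (finiteThetaCoeff q n).HasFiniteSupport :=
  (Set.finite_Icc (-(n + 1) : ℤ) n).subset fun _ h ↦
    not_imp_comm.1 finiteThetaCoeff_eq_zero h

lemma thetaCoeff_add_one (hq0 : q ≠ 0) (l : ℤ) :
    thetaCoeff q (l + 1) = -q ^ 2 * (q ^ l) ^ 2 * thetaCoeff q l := by
  have hexp : q ^ (2 * l + 1) = q * (q ^ l) ^ 2 := by
    rw [zpow_add_one₀ hq0, mul_comm 2 l, zpow_mul, mul_comm, zpow_ofNat]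
  rw [thetaCoeff_add hq0, zpow_one, zpow_one, one_pow, zpow_one, hexp]
  ring

lemma thetaCoeff_sub_one (hq0 : q ≠ 0) (l : ℤ) :
    thetaCoeff q (l - 1) = -((q ^ l) ^ 2)⁻¹ * thetaCoeff q l := by
  have h := thetaCoeff_add_one hq0 (l - 1)
  have hql : q ^ l ≠ 0 := zpow_ne_zero l hq0
  rw [sub_add_cancel, zpow_sub_one₀ hq0] at h
  rw [h]
  field_simp

lemma finiteThetaCoeff_succ (hq0 : q ≠ 0) (hq1 : ‖q‖ < 1) (n : ℕ) (l : ℤ) :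
    finiteThetaCoeff q (n + 1) l = (1 + q ^ (4 * n + 4)) * finiteThetaCoeff q n l -
      q ^ (2 * n + 2) * (finiteThetaCoeff q n (l - 1) + finiteThetaCoeff q n (l + 1)) := by
  have hql : q ^ l ≠ 0 := zpow_ne_zero l hq0
  have hstep (a b : ℤ) (hab : a = b - 1) :
      invQPochhammer (q ^ 2) a = (1 - (q ^ b) ^ 2) * invQPochhammer (q ^ 2) b := by
    rw [hab, invQPochhammer_sub_one (norm_sq_lt_one hq1), ← zpow_natCast, ← zpow_mul,
      mul_comm _ b, zpow_mul, zpow_natCast]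
  have hG₁ := hstep (n - l) (n + 1 - l) (by ring)
  have hG₂ := hstep (n - (l + 1)) (n - l) (by ring)
  have hH₁ := hstep (n + l + 1) (n + l + 2) (by ring)
  have hH₂ := hstep (n + (l - 1) + 1) (n + l + 1) (by ring)
  simp only [finiteThetaCoeff, thetaCoeff_add_one hq0, thetaCoeff_sub_one hq0, hG₂, hG₁, hH₂, hH₁,
    show ((n + 1 : ℕ) : ℤ) - l = n + 1 - l by push_cast; ring,
    show ((n + 1 : ℕ) : ℤ) + l + 1 = n + l + 2 by push_cast; ring,
    show (n : ℤ) - (l - 1) = n + 1 - l by ring, show (n : ℤ) + (l + 1) + 1 = n + l + 2 by ring,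
    show 2 * (n + 1) + 1 = 2 * n + 1 + 1 + 1 by ring, qPochhammer_succ, zpow_sub₀ hq0,
    zpow_add₀ hq0, zpow_natCast, zpow_ofNat]
  field_simp
  ring

lemma summable_mul_comp_add_of_hasFiniteSupport {b : ℤ → ℂ} (hb : b.HasFiniteSupport)
    (c : ℤ → ℂ) (d : ℤ) : Summable fun l ↦ c l * b (l + d) :=
  summable_of_hasFiniteSupport ((hb.fun_comp_of_injective (add_left_injective d)).fun_mul_right c)

lemma tsum_odd_mul_neighbours {b : ℤ → ℂ} (hb : b.HasFiniteSupport) :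
    ∑' l : ℤ, (2 * l + 1 : ℂ) * (b (l + -1) + b (l + 1)) =
      2 * ∑' l : ℤ, (2 * l + 1 : ℂ) * b l := by
  have hsum := summable_mul_comp_add_of_hasFiniteSupport hb
  have hpred : ∑' l : ℤ, (2 * l + 1 : ℂ) * b (l + -1) = ∑' l : ℤ, (2 * l + 3 : ℂ) * b l := by
    rw [← (Equiv.addRight (-1 : ℤ)).tsum_eq fun l : ℤ ↦ (2 * l + 3 : ℂ) * b l]
    refine tsum_congr fun l ↦ ?_
    rw [Equiv.coe_addRight]
    push_cast
    ring
  have hsucc : ∑' l : ℤ, (2 * l + 1 : ℂ) * b (l + 1) = ∑' l : ℤ, (2 * l - 1 : ℂ) * b l := by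
    rw [← (Equiv.addRight (1 : ℤ)).tsum_eq fun l : ℤ ↦ (2 * l - 1 : ℂ) * b l]
    refine tsum_congr fun l ↦ ?_
    rw [Equiv.coe_addRight]
    push_cast
    ring
  have hadd := (hsum (fun l ↦ 2 * l + 3) 0).tsum_add (hsum (fun l ↦ 2 * l - 1) 0)
  simp only [add_zero] at hadd
  simp only [mul_add]
  rw [(hsum _ (-1)).tsum_add (hsum _ 1), hpred, hsucc, ← hadd, ← tsum_mul_left]
  exact tsum_congr fun l ↦ by ring

lemma tsum_odd_mul_finiteThetaCoeff (hq0 : q ≠ 0) (hq1 : ‖q‖ < 1) (n : ℕ) :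
    ∑' l : ℤ, (2 * l + 1 : ℂ) * finiteThetaCoeff q n l = 2 * qPochhammer (q ^ 2) n ^ 2 := by
  induction n with
  | zero =>
    have hq2 : 1 - q ^ 2 ≠ 0 := by simpa using one_sub_pow_succ_ne_zero (norm_sq_lt_one hq1) 0
    have hzero : finiteThetaCoeff q 0 0 = 1 := by
      simp [finiteThetaCoeff, thetaCoeff, invQPochhammer, qPochhammer, hq2]
    have hneg : finiteThetaCoeff q 0 (-1) = -1 := by
      simp [finiteThetaCoeff, thetaCoeff, invQPochhammer, qPochhammer, hq2]
    rw [tsum_eq_sum (s := {0, -1}), Finset.sum_pair (by norm_num), hzero, hneg]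
    · norm_num [qPochhammer]
    · intro l hl
      rw [finiteThetaCoeff_eq_zero, mul_zero]
      simp only [Finset.mem_insert, Finset.mem_singleton] at hl
      rw [Set.mem_Icc]
      lia
  | succ n ih =>
    have hfin := hasFiniteSupport_finiteThetaCoeff q n
    have hsum := summable_mul_comp_add_of_hasFiniteSupport hfin
    have hneighbours := tsum_odd_mul_neighbours hfin
    simp only [mul_add] at hneighbours
    have hcentre := hsum (fun l ↦ 2 * l + 1) 0
    have hsides := (hsum (fun l ↦ 2 * l + 1) (-1)).add (hsum (fun l ↦ 2 * l + 1) 1)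
    calc ∑' l : ℤ, (2 * l + 1 : ℂ) * finiteThetaCoeff q (n + 1) l
        = ∑' l : ℤ, ((1 + q ^ (4 * n + 4)) * ((2 * l + 1 : ℂ) * finiteThetaCoeff q n (l + 0)) -
            q ^ (2 * n + 2) * ((2 * l + 1 : ℂ) * finiteThetaCoeff q n (l + -1) +
              (2 * l + 1 : ℂ) * finiteThetaCoeff q n (l + 1))) :=
          tsum_congr fun l ↦ by
            rw [finiteThetaCoeff_succ hq0 hq1, add_zero, ← sub_eq_add_neg]
            ring
      _ = (1 + q ^ (4 * n + 4)) * (2 * qPochhammer (q ^ 2) n ^ 2) -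
            q ^ (2 * n + 2) * (2 * (2 * qPochhammer (q ^ 2) n ^ 2)) := by
          rw [(hcentre.mul_left _).tsum_sub (hsides.mul_left _), tsum_mul_left, tsum_mul_left,
            hneighbours]
          simp only [add_zero, ih]
      _ = 2 * qPochhammer (q ^ 2) (n + 1) ^ 2 := by
          rw [qPochhammer_succ]
          ring

lemma tendsto_finiteThetaCoeff (hq1 : ‖q‖ < 1) (l : ℤ) :
    Filter.Tendsto (fun n ↦ finiteThetaCoeff q n l) Filter.atTop
      (nhds (thetaCoeff q l * (eulerProduct (q ^ 2))⁻¹)) := by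
  have hQ := norm_sq_lt_one hq1
  have htwo : Filter.Tendsto (fun n : ℕ ↦ 2 * n + 1) Filter.atTop Filter.atTop :=
    Filter.tendsto_atTop_mono (fun n ↦ by rw [id]; lia) Filter.tendsto_id
  have h := ((((tendsto_qPochhammer hQ).comp htwo).mul
    (tendsto_invQPochhammer_add hQ (-l))).mul (tendsto_invQPochhammer_add hQ (l + 1))).const_mul
      (thetaCoeff q l)
  rw [mul_inv_cancel₀ (eulerProduct_ne_zero hQ), one_mul] at h
  simp only [← sub_eq_add_neg, ← add_assoc] at h
  exact h

lemma exists_norm_finiteThetaCoeff_le (hq1 : ‖q‖ < 1) :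
    ∃ K : ℝ, ∀ n l, ‖finiteThetaCoeff q n l‖ ≤ ‖thetaCoeff q l‖ * K := by
  obtain ⟨K, hK⟩ := exists_norm_invQPochhammer_le (norm_sq_lt_one hq1)
  obtain ⟨K', hK'⟩ := exists_norm_qPochhammer_le (norm_sq_lt_one hq1)
  have hK0 : 0 ≤ K := (norm_nonneg _).trans (hK 0)
  have hK'0 : 0 ≤ K' := (norm_nonneg _).trans (hK' 0)
  refine ⟨K' * K * K, fun n l ↦ ?_⟩
  rw [finiteThetaCoeff, norm_mul, norm_mul (_ * _), norm_mul (qPochhammer _ _)]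
  gcongr <;> apply_rules

lemma summable_norm_odd_mul_thetaCoeff (hq0 : q ≠ 0) (hq1 : ‖q‖ < 1) :
    Summable fun l : ℤ ↦ ‖(2 * l + 1 : ℂ) * thetaCoeff q l‖ := by
  have hpos := norm_pos_iff.2 hq0
  have hsum := summable_abs_pow_mul_zpow_mul_zpow_sq hpos hq1 hpos
  refine Summable.of_nonneg_of_le (fun l ↦ norm_nonneg _) (fun l ↦ ?_)
    (((hsum 1).mul_left 2).add (hsum 0))
  have hodd : ‖(2 * l + 1 : ℂ)‖ ≤ 2 * |(l : ℝ)| + 1 :=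
    (norm_add_le _ _).trans_eq (by simp)
  have hcoeff : ‖thetaCoeff q l‖ = ‖q‖ ^ l * ‖q‖ ^ (l ^ 2) := by
    rw [thetaCoeff, zpow_add₀ hq0]
    simp [mul_comm]
  calc ‖(2 * l + 1 : ℂ) * thetaCoeff q l‖ ≤ (2 * |(l : ℝ)| + 1) * ‖thetaCoeff q l‖ := by
        rw [norm_mul]
        gcongr
    _ = _ := by
        rw [hcoeff]
        ring

lemma tsum_int_odd_mul_thetaCoeff (hq0 : q ≠ 0) (hq1 : ‖q‖ < 1) :
    ∑' l : ℤ, (2 * l + 1 : ℂ) * thetaCoeff q l = 2 * eulerProduct (q ^ 2) ^ 3 := by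
  have hQ := norm_sq_lt_one hq1
  obtain ⟨K, hK⟩ := exists_norm_finiteThetaCoeff_le hq1
  have hlim := tendsto_tsum_of_dominated_convergence (𝓕 := Filter.atTop)
    ((summable_norm_odd_mul_thetaCoeff hq0 hq1).mul_right K)
    (fun l ↦ (tendsto_finiteThetaCoeff hq1 l).const_mul (2 * l + 1 : ℂ))
    (.of_forall fun n l ↦ by
      rw [norm_mul, norm_mul, mul_assoc]
      exact mul_le_mul_of_nonneg_left (hK n l) (norm_nonneg _))
  simp only [tsum_odd_mul_finiteThetaCoeff hq0 hq1, ← mul_assoc, tsum_mul_right] at hlim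
  have h := tendsto_nhds_unique hlim (((tendsto_qPochhammer hQ).pow 2).const_mul 2)
  rw [mul_inv_eq_iff_eq_mul₀ (eulerProduct_ne_zero hQ)] at h
  rw [h]
  ring

theorem tsum_nat_odd_mul_thetaCoeff (hq0 : q ≠ 0) (hq1 : ‖q‖ < 1) :
    ∑' l : ℕ, (2 * l + 1 : ℂ) * thetaCoeff q l = eulerProduct (q ^ 2) ^ 3 := by
  have h := tsum_nat_add_neg_add_one (summable_norm_odd_mul_thetaCoeff hq0 hq1).of_norm
  rw [tsum_int_odd_mul_thetaCoeff hq0 hq1] at h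
  have hpair (n : ℕ) : (2 * (n : ℤ) + 1 : ℂ) * thetaCoeff q n +
      (2 * ((-(n + 1) : ℤ) : ℂ) + 1) * thetaCoeff q (-(n + 1)) =
        2 * ((2 * n + 1) * thetaCoeff q n) := by
    rw [neg_add', thetaCoeff_neg_sub_one]
    push_cast
    ring
  rw [tsum_congr hpair, tsum_mul_left] at h
  exact mul_left_cancel₀ two_ne_zero h

end Jacobi

section AppellKernel

variable {q w : ℂ}

/-- The kernel `w / (1 - w²)` of the Appell–Lerch sums: with `w = e^{2πiz} q^j`, it collects the
two halves of the mock theta function of degree `M / 2` and shift `1 / 2`. -/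
def appellKernel (w : ℂ) : ℂ := w / (1 - w ^ 2)

lemma appellKernel_inv (w : ℂ) : appellKernel w⁻¹ = -appellKernel w := by
  rcases eq_or_ne w 0 with rfl | hw
  · simp [appellKernel]
  rcases eq_or_ne (w ^ 2) 1 with hw2 | hw2
  · simp [appellKernel, hw2]
  · have h1 : 1 - w ^ 2 ≠ 0 := sub_ne_zero.2 hw2.symm
    have h2 : w ^ 2 - 1 ≠ 0 := sub_ne_zero.2 hw2
    rw [appellKernel, appellKernel, inv_pow]
    field_simp
    ring

lemma pow_two_mul_sub_one_mul_appellKernel (hw : w ^ 2 ≠ 1) (n : ℕ) :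
    (w ^ (2 * n) - 1) * appellKernel w = -∑ i ∈ Finset.range n, w ^ (2 * i + 1) := by
  have h1 : 1 - w ^ 2 ≠ 0 := sub_ne_zero.2 hw.symm
  simp only [pow_succ w (2 * _), pow_mul, ← Finset.sum_mul]
  rw [← geom_sum_mul, appellKernel]
  field_simp
  ring

lemma tendsto_appellKernel_mul_pow (hq1 : ‖q‖ < 1) (x : ℂ) :
    Filter.Tendsto (fun n : ℕ ↦ appellKernel (x * q ^ n)) Filter.atTop (nhds 0) := by
  have hcont : ContinuousAt appellKernel 0 :=
    continuousAt_id.div (by fun_prop) (by norm_num)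
  have hlim := (tendsto_pow_atTop_nhds_zero_of_norm_lt_one hq1).const_mul x
  rw [mul_zero] at hlim
  rw [← zero_div (1 - (0 : ℂ) ^ 2)]
  exact hcont.tendsto.comp hlim

lemma exists_norm_appellKernel_mul_zpow_le (hq1 : ‖q‖ < 1) (x : ℂ) :
    ∃ K : ℝ, ∀ n : ℤ, ‖appellKernel (x * q ^ n)‖ ≤ K := by
  obtain ⟨K, hK⟩ := (tendsto_appellKernel_mul_pow hq1 x).norm.bddAbove_range
  obtain ⟨K', hK'⟩ := (tendsto_appellKernel_mul_pow hq1 x⁻¹).norm.bddAbove_range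
  refine ⟨max K K', fun n ↦ ?_⟩
  rcases n.eq_nat_or_neg with ⟨n, rfl | rfl⟩
  · rw [zpow_natCast]
    exact le_max_of_le_left (hK ⟨n, rfl⟩)
  · rw [← inv_inv x, zpow_neg, ← mul_inv, appellKernel_inv, norm_neg, zpow_natCast]
    exact le_max_of_le_right (hK' ⟨n, rfl⟩)

end AppellKernel

section AppellSum

variable {q x w : ℂ}

/-- The Appell–Lerch sum `∑ (-1)ⁿ q^{n²} f(x qⁿ)` with `f(w) = w / (1 - w²)`. It is a constant
multiple of the reciprocal of `oddTheta`. -/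
def appellSum (q x : ℂ) : ℂ := ∑' n : ℤ, (-1) ^ n * q ^ (n ^ 2) * appellKernel (x * q ^ n)

/-- The odd Jacobi theta function `∑ (-1)ⁿ q^{n² + n} x^{2n+1}`, i.e. `ϑ₁₁` in multiplicative
variables and without its constant prefactor. -/
def oddTheta (q x : ℂ) : ℂ := ∑' n : ℤ, thetaCoeff q n * x ^ (2 * n + 1)

/-- The Dirichlet kernel `w^{-2l} + w^{-2l+2} + ⋯ + w^{2l}`, in multiplicative variables. -/
def dirichletSum (w : ℂ) (l : ℕ) : ℂ := ∑ i ∈ Finset.range (2 * l + 1), w ^ (2 * ((i : ℤ) - l))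

lemma dirichletSum_one (l : ℕ) : dirichletSum 1 l = 2 * l + 1 := by
  simp [dirichletSum]

lemma sub_mul_appellKernel (hw0 : w ≠ 0) (hw : w ^ 2 ≠ 1) (l : ℕ) :
    (w ^ (2 * (l : ℤ) + 1) - w ^ (-(2 * (l : ℤ) + 1))) * appellKernel w = -dirichletSum w l := by
  have h := pow_two_mul_sub_one_mul_appellKernel hw (2 * l + 1)
  have hpow : w ^ (2 * (2 * l + 1)) = (w ^ (2 * (l : ℤ) + 1)) ^ 2 := by
    rw [← zpow_natCast, ← zpow_natCast, ← zpow_mul]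
    push_cast
    ring_nf
  have hsum : ∑ i ∈ Finset.range (2 * l + 1), w ^ (2 * i + 1) =
      w ^ (2 * (l : ℤ) + 1) * dirichletSum w l := by
    rw [dirichletSum, Finset.mul_sum]
    refine Finset.sum_congr rfl fun i _ ↦ ?_
    rw [← zpow_natCast, ← zpow_add₀ hw0]
    push_cast
    ring_nf
  have hne : w ^ (2 * (l : ℤ) + 1) ≠ 0 := zpow_ne_zero _ hw0
  rw [hpow, hsum] at h
  rw [zpow_neg]
  field_simp
  linear_combination h

lemma summable_norm_thetaCoeff_mul_zpow (hq0 : q ≠ 0) (hq1 : ‖q‖ < 1) (hx : x ≠ 0) :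
    Summable fun n : ℤ ↦ ‖thetaCoeff q n * x ^ (2 * n + 1)‖ := by
  refine ((summable_norm_zpow_mul_zpow_sq hq0 hq1
    (mul_ne_zero hq0 (pow_ne_zero 2 hx))).mul_left ‖x‖).congr fun n ↦ ?_
  rw [← norm_mul, thetaCoeff, zpow_add₀ hq0, zpow_add_one₀ hx, zpow_mul, zpow_ofNat, mul_zpow]
  simp only [norm_mul, norm_zpow, norm_neg, norm_one, one_zpow]
  ring

lemma summable_norm_appellSum (hq0 : q ≠ 0) (hq1 : ‖q‖ < 1) (x : ℂ) :
    Summable fun n : ℤ ↦ ‖(-1) ^ n * q ^ (n ^ 2) * appellKernel (x * q ^ n)‖ := by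
  obtain ⟨K, hK⟩ := exists_norm_appellKernel_mul_zpow_le hq1 x
  refine Summable.of_nonneg_of_le (fun n ↦ norm_nonneg _) (fun n ↦ ?_)
    ((summable_norm_zpow_mul_zpow_sq hq0 hq1 (neg_ne_zero.2 one_ne_zero)).mul_right K)
  rw [norm_mul]
  exact mul_le_mul_of_nonneg_left (hK n) (norm_nonneg _)

lemma oddTheta_eq_mul_oddTheta_mul_zpow (hq0 : q ≠ 0) (hx : x ≠ 0) (p : ℤ) :
    oddTheta q x = (-1) ^ p * x ^ (2 * p) * q ^ (p ^ 2) * oddTheta q (x * q ^ p) := by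
  rw [oddTheta, ← (Equiv.addRight p).tsum_eq, oddTheta, ← tsum_mul_left]
  refine tsum_congr fun l ↦ ?_
  rw [Equiv.coe_addRight, thetaCoeff_add hq0, mul_zpow,
    show 2 * (l + p) + 1 = 2 * p + (2 * l + 1) by ring, zpow_add₀ hx]
  ring

lemma oddTheta_eq_tsum_nat (hq0 : q ≠ 0) (hq1 : ‖q‖ < 1) (hx : x ≠ 0) :
    oddTheta q x =
      ∑' l : ℕ, thetaCoeff q l * (x ^ (2 * (l : ℤ) + 1) - x ^ (-(2 * (l : ℤ) + 1))) := by
  rw [oddTheta,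
    ← tsum_nat_add_neg_add_one (summable_norm_thetaCoeff_mul_zpow hq0 hq1 hx).of_norm]
  refine tsum_congr fun l ↦ ?_
  rw [neg_add', thetaCoeff_neg_sub_one, show 2 * (-(l : ℤ) - 1) + 1 = -(2 * l + 1) by ring]
  ring

lemma oddTheta_zpow (hq0 : q ≠ 0) (hq1 : ‖q‖ < 1) (n : ℤ) : oddTheta q (q ^ n) = 0 := by
  have hone : oddTheta q 1 = 0 := by
    rw [oddTheta_eq_tsum_nat hq0 hq1 one_ne_zero]
    simp
  have h := oddTheta_eq_mul_oddTheta_mul_zpow hq0 one_ne_zero n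
  rw [hone, one_mul, eq_comm, mul_eq_zero] at h
  refine h.resolve_left ?_
  rw [one_zpow, mul_one]
  exact mul_ne_zero (zpow_ne_zero _ (by norm_num)) (zpow_ne_zero _ hq0)

lemma tsum_thetaCoeff_mul_dirichletSum (hq0 : q ≠ 0) (hq1 : ‖q‖ < 1) (hw0 : w ≠ 0)
    (hw : w ^ 2 ≠ 1) :
    ∑' l : ℕ, thetaCoeff q l * dirichletSum w l = -(appellKernel w * oddTheta q w) := by
  rw [oddTheta_eq_tsum_nat hq0 hq1 hw0, ← tsum_mul_left, ← tsum_neg]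
  refine tsum_congr fun l ↦ ?_
  rw [← neg_neg (dirichletSum w l), ← sub_mul_appellKernel hw0 hw]
  ring

lemma tsum_thetaCoeff_mul_dirichletSum_zpow (hq0 : q ≠ 0) (hq1 : ‖q‖ < 1) (n : ℤ) :
    ∑' l : ℕ, thetaCoeff q l * dirichletSum (q ^ n) l =
      if n = 0 then eulerProduct (q ^ 2) ^ 3 else 0 := by
  split_ifs with hn
  · simp only [hn, zpow_zero, dirichletSum_one, ← tsum_nat_odd_mul_thetaCoeff hq0 hq1, mul_comm]
  · have hne : (q ^ n) ^ 2 ≠ 1 := fun h ↦ by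
      have hnorm := congrArg norm h
      rw [norm_pow, norm_one, norm_zpow, pow_eq_one_iff_of_nonneg (by positivity) two_ne_zero,
        zpow_eq_one_iff_right₀ (norm_nonneg q) hq1.ne] at hnorm
      exact hn hnorm
    rw [tsum_thetaCoeff_mul_dirichletSum hq0 hq1 (zpow_ne_zero n hq0) hne, oddTheta_zpow hq0 hq1,
      mul_zero, neg_zero]

lemma summable_mul_thetaCoeff_mul_dirichletSum (hq0 : q ≠ 0) (hq1 : ‖q‖ < 1) (hx0 : x ≠ 0)
    (hx : ∀ n : ℤ, (x * q ^ n) ^ 2 ≠ 1) :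
    Summable fun p : ℤ × ℕ ↦
      x ^ (2 * p.1) * q ^ (2 * p.1 ^ 2) * (thetaCoeff q p.2 * dirichletSum (x * q ^ p.1) p.2) := by
  let g : ℤ × ℤ → ℂ := fun p ↦ x ^ (2 * p.1) * q ^ (2 * p.1 ^ 2) *
    (thetaCoeff q p.2 * appellKernel (x * q ^ p.1) * (x * q ^ p.1) ^ (2 * p.2 + 1))
  have hprod := summable_mul_of_summable_norm (summable_norm_appellSum hq0 hq1 x)
    (summable_norm_thetaCoeff_mul_zpow hq0 hq1 hx0)
  have hg : Summable g := by
    refine (((Equiv.refl ℤ).prodShear Equiv.addRight).summable_iff.2 hprod).congr fun p ↦ ?_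
    have hsign : ((-1 : ℂ) ^ p.1) * (-1) ^ p.1 = 1 := by rw [← mul_zpow]; simp
    simp only [g, Function.comp, Equiv.prodShear_apply, Equiv.refl_apply, Equiv.coe_addRight,
      thetaCoeff_add hq0, mul_zpow]
    rw [show 2 * (p.2 + p.1) + 1 = 2 * p.1 + (2 * p.2 + 1) by ring, zpow_add₀ hx0 (2 * p.1),
      two_mul (p.1 ^ 2), zpow_add₀ hq0 (p.1 ^ 2)]
    linear_combination (q ^ (p.1 ^ 2) * appellKernel (x * q ^ p.1) * q ^ (p.1 ^ 2) *
      (q ^ p.1) ^ (2 * p.2 + 1) * thetaCoeff q p.2 * x ^ (2 * p.1) * x ^ (2 * p.2 + 1)) * hsign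
  have hpos : Summable fun p : ℤ × ℕ ↦ g (p.1, p.2) :=
    hg.comp_injective (Function.injective_id.prodMap Nat.cast_injective)
  have hneg : Summable fun p : ℤ × ℕ ↦ g (p.1, -p.2 - 1) :=
    hg.comp_injective (i := Prod.map id fun l : ℕ ↦ -(l : ℤ) - 1)
      (Function.injective_id.prodMap fun a b h ↦ by simpa using h)
  refine (hpos.add hneg).neg.congr fun p ↦ ?_
  have hw0 : x * q ^ p.1 ≠ 0 := mul_ne_zero hx0 (zpow_ne_zero _ hq0)
  rw [← neg_neg (dirichletSum _ _), ← sub_mul_appellKernel hw0 (hx _)]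
  simp only [g, thetaCoeff_neg_sub_one, show 2 * (-(p.2 : ℤ) - 1) + 1 = -(2 * p.2 + 1) by ring]
  ring

lemma norm_zpow_mul_dirichletSum_zpow_le (hq0 : q ≠ 0) (hq1 : ‖q‖ < 1) (n : ℤ) (l : ℕ) :
    ‖q ^ (n ^ 2 + (l : ℤ) ^ 2) * dirichletSum (q ^ n) l‖ ≤ 2 * l + 1 := by
  rw [dirichletSum, Finset.mul_sum]
  refine (norm_sum_le_of_le (n := fun _ ↦ 1) _ fun i hi ↦ ?_).trans (by simp)
  rw [← zpow_mul, ← zpow_add₀ hq0, norm_zpow]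
  refine zpow_le_one₀ (norm_pos_iff.2 hq0) hq1.le ?_
  have hi : (i : ℤ) ≤ 2 * l := by exact_mod_cast Nat.lt_succ_iff.1 (Finset.mem_range.1 hi)
  nlinarith [sq_nonneg (n + ((i : ℤ) - l)), mul_nonneg (Int.natCast_nonneg i) (sub_nonneg.2 hi)]

lemma summable_mul_thetaCoeff_mul_dirichletSum_zpow (hq0 : q ≠ 0) (hq1 : ‖q‖ < 1) (hx : x ≠ 0) :
    Summable fun p : ℤ × ℕ ↦
      x ^ (2 * p.1) * q ^ (2 * p.1 ^ 2) * (thetaCoeff q p.2 * dirichletSum (q ^ (-p.1)) p.2) := by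
  have hgeom : Summable fun l : ℕ ↦ (2 * l + 1 : ℝ) * ‖q‖ ^ l := by
    have h (k : ℕ) := summable_pow_mul_geometric_of_norm_lt_one (R := ℝ) k (r := ‖q‖) (by simpa)
    refine (((h 1).mul_left 2).add (h 0)).congr fun l ↦ by ring
  refine Summable.of_norm_bounded ((summable_norm_zpow_mul_zpow_sq hq0 hq1
    (pow_ne_zero 2 hx)).mul_of_nonneg hgeom (fun _ ↦ norm_nonneg _) fun _ ↦ by positivity)
    fun ⟨n, l⟩ ↦ ?_
  have hterm : x ^ (2 * n) * q ^ (2 * n ^ 2) * (thetaCoeff q l * dirichletSum (q ^ (-n)) l) =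
      (-1) ^ l * ((x ^ 2) ^ n * q ^ (n ^ 2)) *
        (q ^ ((-n) ^ 2 + (l : ℤ) ^ 2) * dirichletSum (q ^ (-n)) l) * q ^ l := by
    rw [thetaCoeff, zpow_natCast, neg_sq, zpow_mul, two_mul (n ^ 2), zpow_add₀ hq0, zpow_add₀ hq0,
      zpow_add₀ hq0, zpow_natCast q l, zpow_ofNat]
    ring
  rw [hterm, norm_mul, norm_mul, norm_mul, norm_pow, norm_neg, norm_one, one_pow, one_mul,
    norm_pow, ← mul_assoc]
  gcongr
  exact norm_zpow_mul_dirichletSum_zpow_le hq0 hq1 (-n) l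

lemma tsum_mul_dirichletSum_mul_zpow (hq0 : q ≠ 0) (hq1 : ‖q‖ < 1) (hx : x ≠ 0) (l : ℕ) :
    ∑' n : ℤ, x ^ (2 * n) * q ^ (2 * n ^ 2) * dirichletSum (x * q ^ n) l =
      ∑' n : ℤ, x ^ (2 * n) * q ^ (2 * n ^ 2) * dirichletSum (q ^ (-n)) l := by
  have hshift (n s : ℤ) : x ^ (2 * (n - s)) * q ^ (2 * (n - s) ^ 2) * (x * q ^ (n - s)) ^ (2 * s) =
      x ^ (2 * n) * q ^ (2 * n ^ 2) * (q ^ (-n)) ^ (2 * s) := by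
    rw [mul_zpow, ← zpow_mul, ← zpow_mul, mul_mul_mul_comm, ← zpow_add₀ hx, ← zpow_add₀ hq0,
      mul_assoc, ← zpow_add₀ hq0]
    ring_nf
  have hsum (s : ℤ) : Summable fun n : ℤ ↦
      x ^ (2 * n) * q ^ (2 * n ^ 2) * (q ^ (-n)) ^ (2 * s) := by
    refine (summable_norm_zpow_mul_zpow_mul_sq hq0 hq1 (mul_ne_zero (zpow_ne_zero 2 hx)
      (zpow_ne_zero (-(2 * s)) hq0)) two_ne_zero).of_norm.congr fun n ↦ ?_
    rw [mul_zpow, ← zpow_mul, ← zpow_mul, ← zpow_mul, mul_right_comm, Nat.cast_ofNat,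
      show -(2 * s) * n = -n * (2 * s) by ring]
  simp only [dirichletSum, Finset.mul_sum]
  rw [Summable.tsum_finsetSum fun i _ ↦ hsum _, Summable.tsum_finsetSum fun i _ ↦ ?_]
  · refine Finset.sum_congr rfl fun i _ ↦ ?_
    rw [← (Equiv.subRight ((i : ℤ) - l)).tsum_eq]
    exact tsum_congr fun n ↦ hshift n _
  · exact (Equiv.subRight ((i : ℤ) - l)).summable_iff.1 ((hsum _).congr fun n ↦ (hshift n _).symm)

theorem appellSum_mul_oddTheta (hq0 : q ≠ 0) (hq1 : ‖q‖ < 1) (hx0 : x ≠ 0)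
    (hx : ∀ n : ℤ, (x * q ^ n) ^ 2 ≠ 1) :
    appellSum q x * oddTheta q x = -eulerProduct (q ^ 2) ^ 3 := by
  let F (n : ℤ) (l : ℕ) := x ^ (2 * n) * q ^ (2 * n ^ 2) *
    (thetaCoeff q l * dirichletSum (x * q ^ n) l)
  let H (n : ℤ) (l : ℕ) := x ^ (2 * n) * q ^ (2 * n ^ 2) *
    (thetaCoeff q l * dirichletSum (q ^ (-n)) l)
  have hF : Summable (Function.uncurry F) :=
    summable_mul_thetaCoeff_mul_dirichletSum hq0 hq1 hx0 hx
  have hH : Summable (Function.uncurry H) :=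
    summable_mul_thetaCoeff_mul_dirichletSum_zpow hq0 hq1 hx0
  have hrow (n : ℤ) : (-1) ^ n * q ^ (n ^ 2) * appellKernel (x * q ^ n) * oddTheta q x =
      -∑' l, F n l := by
    have hsign : ((-1 : ℂ) ^ n) * (-1) ^ n = 1 := by rw [← mul_zpow]; simp
    rw [tsum_mul_left, tsum_thetaCoeff_mul_dirichletSum hq0 hq1
      (mul_ne_zero hx0 (zpow_ne_zero n hq0)) (hx n),
      oddTheta_eq_mul_oddTheta_mul_zpow hq0 hx0 n, two_mul (n ^ 2), zpow_add₀ hq0]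
    linear_combination (q ^ (n ^ 2) * q ^ (n ^ 2) * appellKernel (x * q ^ n) * x ^ (2 * n) *
      oddTheta q (x * q ^ n)) * hsign
  have hcolumn (l : ℕ) : ∑' n, F n l = ∑' n, H n l := by
    simp only [F, H, mul_left_comm _ (thetaCoeff q l), tsum_mul_left,
      tsum_mul_dirichletSum_mul_zpow hq0 hq1 hx0]
  calc appellSum q x * oddTheta q x
      = -∑' n, ∑' l, F n l := by
        rw [appellSum, ← tsum_mul_right, tsum_congr hrow, tsum_neg]
    _ = -∑' n, ∑' l, H n l := by
        rw [← hF.tsum_comm, tsum_congr hcolumn, hH.tsum_comm]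
    _ = -eulerProduct (q ^ 2) ^ 3 := by
        simp only [H, tsum_mul_left, tsum_thetaCoeff_mul_dirichletSum_zpow hq0 hq1]
        rw [tsum_eq_single 0 fun n hn ↦ by simp [hn]]
        simp

lemma appellSum_mul_zpow (hq0 : q ≠ 0) (hq1 : ‖q‖ < 1) (hx0 : x ≠ 0)
    (hx : ∀ n : ℤ, (x * q ^ n) ^ 2 ≠ 1) (p : ℤ) :
    appellSum q (x * q ^ p) = (-1) ^ p * x ^ (2 * p) * q ^ (p ^ 2) * appellSum q x := by
  have h := appellSum_mul_oddTheta hq0 hq1 hx0 hx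
  have hp := appellSum_mul_oddTheta hq0 hq1 (mul_ne_zero hx0 (zpow_ne_zero p hq0)) fun n ↦ by
    rw [mul_assoc, ← zpow_add₀ hq0]
    exact hx (p + n)
  have hne : appellSum q (x * q ^ p) * oddTheta q (x * q ^ p) ≠ 0 := by
    rw [hp, neg_ne_zero]
    exact pow_ne_zero 3 (eulerProduct_ne_zero (norm_sq_lt_one hq1))
  rw [← hp, oddTheta_eq_mul_oddTheta_mul_zpow hq0 hx0 p] at h
  exact mul_right_cancel₀ (right_ne_zero_of_mul hne) (h.symm.trans (by ring))

end AppellSum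

section Expansion

variable {M : ℕ} {q x y : ℂ}

/-- The general term `xⁿ q^{d n²}` of the theta series of degree `d`, in multiplicative
variables. -/
def thetaTerm (d : ℕ) (q x : ℂ) (n : ℤ) : ℂ := x ^ n * q ^ ((d : ℤ) * n ^ 2)

/-- The alternating theta series `∑ (-1)ⁿ xⁿ q^{d n²}`. -/
def signedTheta (d : ℕ) (q x : ℂ) : ℂ := ∑' n : ℤ, (-1) ^ n * thetaTerm d q x n

/-- One half of the mock theta function of degree `M / 2` and shift `1 / 2`, in multiplicative
variables `q = e^{2πiτ}`, `x = e^{2πiz₁}`, `y = e^{2πiz₂}`. The other half exchanges `x` and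
`y`. -/
def mockThetaHalf (M : ℕ) (q x y : ℂ) : ℂ :=
  ∑' n : ℤ, thetaTerm M q ((x * y) ^ M) n * appellKernel (x * q ^ n)

/-- The theta series obtained from `mockThetaHalf` when the monomial `w ^ e` replaces the
kernel `w / (1 - w²)`. -/
def monomialTheta (M : ℕ) (q x y : ℂ) (e : ℤ) : ℂ :=
  ∑' p : ℤ, thetaTerm M q ((x * y) ^ M) p * (x * q ^ p) ^ e

/-- The general term of the double series for
`signedTheta (M + 1) q ((x / y) ^ M) * mockThetaHalf M q x y` with the factor `w ^ (2 * M * l)`,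
`w = x q^{p+l}`, replaced by `w ^ (2 * M * l) - 1`. -/
def differenceTerm (M : ℕ) (q x y : ℂ) (l p : ℤ) : ℂ :=
  thetaTerm M q ((x * y) ^ M) p * ((-1) ^ l * q ^ (l ^ 2) *
    (((x * q ^ (p + l)) ^ (2 * M * l) - 1) * appellKernel (x * q ^ (p + l))))

/-- The sum of `differenceTerm` over the rows `L` and `-L`, in closed form. -/
def rowPairSum (M : ℕ) (q x y : ℂ) (L : ℕ) : ℂ :=
  (-1) ^ L * q ^ (L ^ 2) * ∑ i ∈ Finset.range (M * L), q ^ (L * (2 * i + 1)) *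
    (monomialTheta M q x y (-(2 * (i : ℤ) + 1)) - monomialTheta M q x y (2 * (i : ℤ) + 1))

lemma summable_norm_thetaTerm {d : ℕ} (hd : d ≠ 0) (hq0 : q ≠ 0) (hq1 : ‖q‖ < 1) (hx : x ≠ 0) :
    Summable fun n : ℤ ↦ ‖thetaTerm d q x n‖ :=
  summable_norm_zpow_mul_zpow_mul_sq hq0 hq1 hx hd

lemma thetaTerm_inv_neg (d : ℕ) (q x : ℂ) (n : ℤ) : thetaTerm d q x⁻¹ (-n) = thetaTerm d q x n := by
  rw [thetaTerm, thetaTerm, inv_zpow', neg_neg, neg_sq]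

lemma neg_one_zpow_neg (n : ℤ) : (-1 : ℂ) ^ (-n) = (-1) ^ n := by
  rw [zpow_neg, ← inv_zpow, inv_neg_one]

lemma signedTheta_inv (d : ℕ) (q x : ℂ) : signedTheta d q x⁻¹ = signedTheta d q x := by
  rw [signedTheta, ← (Equiv.neg ℤ).tsum_eq]
  exact tsum_congr fun n ↦ by rw [Equiv.neg_apply, neg_one_zpow_neg, thetaTerm_inv_neg]

lemma summable_norm_mockThetaHalf (hM : M ≠ 0) (hq0 : q ≠ 0) (hq1 : ‖q‖ < 1) (hx : x ≠ 0)
    (hy : y ≠ 0) :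
    Summable fun n : ℤ ↦ ‖thetaTerm M q ((x * y) ^ M) n * appellKernel (x * q ^ n)‖ := by
  obtain ⟨K, hK⟩ := exists_norm_appellKernel_mul_zpow_le hq1 x
  refine Summable.of_nonneg_of_le (fun n ↦ norm_nonneg _) (fun n ↦ ?_)
    ((summable_norm_thetaTerm hM hq0 hq1 (pow_ne_zero M (mul_ne_zero hx hy))).mul_right K)
  rw [norm_mul]
  exact mul_le_mul_of_nonneg_left (hK n) (norm_nonneg _)

lemma summable_monomialTheta (hM : M ≠ 0) (hq0 : q ≠ 0) (hq1 : ‖q‖ < 1) (hx : x ≠ 0)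
    (hy : y ≠ 0) (e : ℤ) :
    Summable fun p : ℤ ↦ thetaTerm M q ((x * y) ^ M) p * (x * q ^ p) ^ e := by
  refine ((summable_norm_thetaTerm hM hq0 hq1 (mul_ne_zero (pow_ne_zero M (mul_ne_zero hx hy))
    (zpow_ne_zero e hq0))).of_norm.mul_right (x ^ e)).congr fun p ↦ ?_
  rw [thetaTerm, thetaTerm, mul_zpow _ (q ^ e), mul_zpow x, zpow_comm q e p]
  ring

lemma monomialTheta_inv (M : ℕ) (q x y : ℂ) (e : ℤ) :
    monomialTheta M q x⁻¹ y⁻¹ e = monomialTheta M q x y (-e) := by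
  rw [monomialTheta, ← (Equiv.neg ℤ).tsum_eq]
  refine tsum_congr fun p ↦ ?_
  rw [Equiv.neg_apply, ← mul_inv, inv_pow, thetaTerm_inv_neg, zpow_neg q, ← mul_inv, inv_zpow']

lemma differenceTerm_neg (M : ℕ) (q x y : ℂ) (l p : ℤ) :
    differenceTerm M q x y (-l) p = -differenceTerm M q x⁻¹ y⁻¹ l (-p) := by
  have hw : x⁻¹ * q ^ (-p + l) = (x * q ^ (p + -l))⁻¹ := by
    rw [mul_inv, ← zpow_neg, neg_add, neg_neg]
  rw [differenceTerm, differenceTerm, hw, appellKernel_inv, inv_zpow', ← mul_inv, inv_pow,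
    thetaTerm_inv_neg, neg_one_zpow_neg, neg_sq, mul_neg]
  ring

lemma hasSum_signedTheta_mul_mockThetaHalf (hM : M ≠ 0) (hq0 : q ≠ 0) (hq1 : ‖q‖ < 1)
    (hx : x ≠ 0) (hy : y ≠ 0) :
    HasSum (fun z : ℤ × ℤ ↦ thetaTerm M q ((x * y) ^ M) z.2 * ((-1) ^ z.1 * q ^ (z.1 ^ 2) *
        ((x * q ^ (z.2 + z.1)) ^ (2 * M * z.1) * appellKernel (x * q ^ (z.2 + z.1)))))
      (signedTheta (M + 1) q ((x / y) ^ M) * mockThetaHalf M q x y) := by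
  have htheta : Summable fun n : ℤ ↦ ‖(-1) ^ n * thetaTerm (M + 1) q ((x / y) ^ M) n‖ := by
    simpa only [norm_mul, norm_zpow, norm_neg, norm_one, one_zpow, one_mul] using
      summable_norm_thetaTerm M.succ_ne_zero hq0 hq1 (pow_ne_zero M (div_ne_zero hx hy))
  have hmock := summable_norm_mockThetaHalf hM hq0 hq1 hx hy
  rw [signedTheta, mockThetaHalf, tsum_mul_tsum_of_summable_norm htheta hmock]
  refine (((Equiv.refl ℤ).prodShear Equiv.addRight).hasSum_iff.2
    (summable_mul_of_summable_norm htheta hmock).hasSum).congr_fun fun ⟨l, p⟩ ↦ ?_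
  have hterm : thetaTerm (M + 1) q ((x / y) ^ M) l * thetaTerm M q ((x * y) ^ M) (p + l) =
      thetaTerm M q ((x * y) ^ M) p * (q ^ (l ^ 2) * (x * q ^ (p + l)) ^ (2 * M * l)) := by
    rw [← exp_log hx, ← exp_log hy, ← exp_log hq0]
    simp only [thetaTerm, ← exp_int_mul, ← exp_nat_mul, ← exp_add, ← exp_sub]
    congr 1
    push_cast
    ring
  simp only [Function.comp, Equiv.prodShear_apply, Equiv.refl_apply, Equiv.coe_addRight]
  linear_combination -(-1) ^ l * appellKernel (x * q ^ (p + l)) * hterm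

lemma hasSum_appellSum_mul_signedTheta (hM : M ≠ 0) (hq0 : q ≠ 0) (hq1 : ‖q‖ < 1)
    (hx0 : x ≠ 0) (hy : y ≠ 0) (hx : ∀ n : ℤ, (x * q ^ n) ^ 2 ≠ 1) :
    HasSum (fun z : ℤ × ℤ ↦ thetaTerm M q ((x * y) ^ M) z.2 * ((-1) ^ z.1 * q ^ (z.1 ^ 2) *
        appellKernel (x * q ^ (z.2 + z.1))))
      (appellSum q x * signedTheta (M + 1) q (x ^ (M + 2) * y ^ M)) := by
  let F (l p : ℤ) := thetaTerm M q ((x * y) ^ M) p * ((-1) ^ l * q ^ (l ^ 2) *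
    appellKernel (x * q ^ (p + l)))
  have hF : Summable (Function.uncurry F) := by
    obtain ⟨K, hK⟩ := exists_norm_appellKernel_mul_zpow_le hq1 x
    refine Summable.of_norm_bounded (((summable_norm_thetaTerm one_ne_zero hq0 hq1
      (neg_ne_zero.2 one_ne_zero)).mul_of_nonneg (summable_norm_thetaTerm hM hq0 hq1
      (pow_ne_zero M (mul_ne_zero hx0 hy))) (fun _ ↦ norm_nonneg _) fun _ ↦
      norm_nonneg _).mul_right K) fun ⟨l, p⟩ ↦ ?_
    simp only [Function.uncurry, F, thetaTerm, Nat.cast_one, one_mul]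
    rw [norm_mul, norm_mul _ (appellKernel _), ← mul_assoc, mul_comm ‖_ * q ^ ((M : ℤ) * _)‖]
    exact mul_le_mul_of_nonneg_left (hK (p + l)) (by positivity)
  have hcolumn (p : ℤ) : ∑' l, F l p =
      appellSum q x * ((-1) ^ p * thetaTerm (M + 1) q (x ^ (M + 2) * y ^ M) p) := by
    have happell : ∑' l : ℤ, (-1) ^ l * q ^ (l ^ 2) * appellKernel (x * q ^ (p + l)) =
        appellSum q (x * q ^ p) := by
      simp only [appellSum, mul_assoc x, ← zpow_add₀ hq0]
    have hterm : thetaTerm (M + 1) q (x ^ (M + 2) * y ^ M) p =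
        thetaTerm M q ((x * y) ^ M) p * (x ^ (2 * p) * q ^ (p ^ 2)) := by
      rw [← exp_log hx0, ← exp_log hy, ← exp_log hq0]
      simp only [thetaTerm, ← exp_int_mul, ← exp_nat_mul, ← exp_add]
      congr 1
      push_cast
      ring
    simp only [F]
    rw [tsum_mul_left, happell, appellSum_mul_zpow hq0 hq1 hx0 hx, hterm]
    ring
  rw [signedTheta, ← tsum_mul_left, ← tsum_congr hcolumn, hF.tsum_comm]
  exact hF.tsum_prod ▸ hF.hasSum

lemma hasSum_tsum_differenceTerm (hM : M ≠ 0) (hq0 : q ≠ 0) (hq1 : ‖q‖ < 1) (hx0 : x ≠ 0)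
    (hy : y ≠ 0) (hx : ∀ n : ℤ, (x * q ^ n) ^ 2 ≠ 1) :
    HasSum (fun l : ℤ ↦ ∑' p : ℤ, differenceTerm M q x y l p)
      (signedTheta (M + 1) q ((x / y) ^ M) * mockThetaHalf M q x y -
        appellSum q x * signedTheta (M + 1) q (x ^ (M + 2) * y ^ M)) := by
  have h : HasSum (fun z : ℤ × ℤ ↦ differenceTerm M q x y z.1 z.2) _ :=
    ((hasSum_signedTheta_mul_mockThetaHalf hM hq0 hq1 hx0 hy).sub
      (hasSum_appellSum_mul_signedTheta hM hq0 hq1 hx0 hy hx)).congr_fun fun z ↦ by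
        rw [differenceTerm]
        ring
  exact h.prod_fiberwise fun l ↦ (h.summable.prod_factor l).hasSum

lemma differenceTerm_natCast (hq0 : q ≠ 0) (hx : ∀ n : ℤ, (x * q ^ n) ^ 2 ≠ 1) (L : ℕ) (p : ℤ) :
    differenceTerm M q x y L p = ∑ i ∈ Finset.range (M * L), -((-1) ^ L * q ^ (L ^ 2) *
      (q ^ (L * (2 * i + 1)) *
        (thetaTerm M q ((x * y) ^ M) p * (x * q ^ p) ^ (2 * (i : ℤ) + 1)))) := by
  have hgeom := pow_two_mul_sub_one_mul_appellKernel (hx (p + L)) (M * L)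
  have hpow (i : ℕ) : (x * q ^ (p + (L : ℤ))) ^ (2 * i + 1) =
      q ^ (L * (2 * i + 1)) * (x * q ^ p) ^ (2 * (i : ℤ) + 1) := by
    rw [zpow_add₀ hq0, ← mul_assoc, mul_pow, zpow_natCast, ← pow_mul, mul_comm]
    norm_cast
  rw [differenceTerm, show (2 * M * L : ℤ) = (2 * (M * L) : ℕ) by push_cast; ring, zpow_natCast,
    zpow_natCast, hgeom, mul_neg, mul_neg, Finset.mul_sum, Finset.mul_sum, ← Finset.sum_neg_distrib]
  refine Finset.sum_congr rfl fun i _ ↦ ?_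
  rw [hpow]
  norm_cast
  ring

lemma tsum_differenceTerm_natCast (hM : M ≠ 0) (hq0 : q ≠ 0) (hq1 : ‖q‖ < 1) (hx0 : x ≠ 0)
    (hy : y ≠ 0) (hx : ∀ n : ℤ, (x * q ^ n) ^ 2 ≠ 1) (L : ℕ) :
    ∑' p : ℤ, differenceTerm M q x y L p = -((-1) ^ L * q ^ (L ^ 2) *
      ∑ i ∈ Finset.range (M * L), q ^ (L * (2 * i + 1)) *
        monomialTheta M q x y (2 * (i : ℤ) + 1)) := by
  simp only [differenceTerm_natCast hq0 hx]
  rw [Summable.tsum_finsetSum fun i _ ↦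
    (((summable_monomialTheta hM hq0 hq1 hx0 hy _).mul_left _).mul_left _).neg,
    Finset.mul_sum, ← Finset.sum_neg_distrib]
  simp only [tsum_neg, tsum_mul_left, monomialTheta]

lemma tsum_differenceTerm_natCast_add_neg (hM : M ≠ 0) (hq0 : q ≠ 0) (hq1 : ‖q‖ < 1)
    (hx0 : x ≠ 0) (hy : y ≠ 0) (hx : ∀ n : ℤ, (x * q ^ n) ^ 2 ≠ 1) (L : ℕ) :
    ∑' p : ℤ, differenceTerm M q x y L p + ∑' p : ℤ, differenceTerm M q x y (-L) p =
      rowPairSum M q x y L := by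
  have hx' (n : ℤ) : (x⁻¹ * q ^ n) ^ 2 ≠ 1 := fun h ↦ hx (-n) <| by
    rw [← inv_inj, ← inv_pow, mul_inv, ← zpow_neg, neg_neg, h, inv_one]
  have hneg : ∑' p : ℤ, differenceTerm M q x y (-L) p =
      -∑' p : ℤ, differenceTerm M q x⁻¹ y⁻¹ L p := by
    rw [← (Equiv.neg ℤ).tsum_eq (differenceTerm M q x⁻¹ y⁻¹ L), ← tsum_neg]
    exact tsum_congr fun p ↦ differenceTerm_neg M q x y L p
  rw [hneg, tsum_differenceTerm_natCast hM hq0 hq1 hx0 hy hx,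
    tsum_differenceTerm_natCast hM hq0 hq1 (inv_ne_zero hx0) (inv_ne_zero hy) hx', rowPairSum]
  simp only [monomialTheta_inv, mul_sub, Finset.sum_sub_distrib]
  ring

theorem hasSum_rowPairSum (hM : M ≠ 0) (hq0 : q ≠ 0) (hq1 : ‖q‖ < 1) (hx0 : x ≠ 0)
    (hy : y ≠ 0) (hx : ∀ n : ℤ, (x * q ^ n) ^ 2 ≠ 1) :
    HasSum (fun j : ℕ ↦ rowPairSum M q x y (j + 1))
      (signedTheta (M + 1) q ((x / y) ^ M) * mockThetaHalf M q x y -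
        appellSum q x * signedTheta (M + 1) q (x ^ (M + 2) * y ^ M)) := by
  have h := (hasSum_tsum_differenceTerm hM hq0 hq1 hx0 hy hx).nat_add_neg
  have hzero : ∑' p : ℤ, differenceTerm M q x y 0 p = 0 := by
    simp only [differenceTerm, mul_zero, zpow_zero, sub_self, zero_mul, tsum_zero]
  have hzero' : rowPairSum M q x y 0 = 0 := by
    rw [rowPairSum, mul_zero, Finset.range_zero, Finset.sum_empty, mul_zero]
  simp only [tsum_differenceTerm_natCast_add_neg hM hq0 hq1 hx0 hy hx, hzero, add_zero] at h
  rw [← hasSum_nat_add_iff' 1, Finset.sum_range_one, hzero', sub_zero] at h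
  exact h

end Expansion

section MultiplicativeVariables

variable {M : ℕ} {τ z : ℂ}

lemma e2_ne_zero (z : ℂ) : e2 z ≠ 0 := exp_ne_zero _

lemma norm_e2_lt_one (hτ : 0 < τ.im) : ‖e2 τ‖ < 1 := by
  have hre : (2 * Real.pi * I * τ).re = -(2 * Real.pi * τ.im) := by simp
  rw [e2, norm_exp, Real.exp_lt_one_iff, hre, neg_lt_zero]
  positivity

lemma e2_mul_e2_zpow_sq_ne_one (h : ¬ InLattice (2 * τ) (2 * z)) (n : ℤ) :
    (e2 z * e2 τ ^ n) ^ 2 ≠ 1 := by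
  intro hone
  rw [e2, e2, ← exp_int_mul, ← exp_add, ← exp_nat_mul, exp_eq_one_iff] at hone
  obtain ⟨a, ha⟩ := hone
  refine h ⟨a, -n, mul_left_cancel₀ two_pi_I_ne_zero ?_⟩
  push_cast at ha ⊢
  linear_combination ha

lemma e2_half_add (z : ℂ) : e2 (1 / 2 + z) = -e2 z := by
  rw [e2, mul_add, exp_add, show 2 * (Real.pi : ℂ) * I * (1 / 2) = Real.pi * I by ring,
    exp_pi_mul_I, neg_one_mul, e2]

lemma e2_neg (z : ℂ) : e2 (-z) = (e2 z)⁻¹ := by rw [e2, e2, mul_neg, exp_neg]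

lemma jTheta_zero_div_eq_signedTheta {d : ℕ} (hd : d ≠ 0) (τ z : ℂ) :
    jTheta 0 d τ ((1 / 2 + z) / d) = signedTheta d (e2 τ) (e2 z) := by
  have hd' : (d : ℂ) ≠ 0 := Nat.cast_ne_zero.2 hd
  refine tsum_congr fun n ↦ ?_
  rw [thetaTerm, ← mul_assoc ((-1) ^ n), ← mul_zpow, neg_one_mul, ← e2_half_add]
  simp only [e2, qpow, ← exp_int_mul, ← exp_add]
  congr 1
  push_cast
  field_simp
  ring

lemma Phi1_half_eq_mockThetaHalf (M : ℕ) (τ z1 z2 : ℂ) :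
    Phi1 (M / 2) (1 / 2) (2 * τ) (2 * z1) (2 * z2) 0 =
      mockThetaHalf M (e2 τ) (e2 z1) (e2 z2) := by
  rw [Phi1, mul_zero, exp_zero, one_mul]
  refine tsum_congr fun n ↦ ?_
  rw [appellKernel, ← mul_div_assoc]
  simp only [thetaTerm, e2, qpow, ← exp_int_mul, ← exp_nat_mul, ← exp_add]
  congr 1
  · congr 1
    push_cast
    ring
  · congr 2
    push_cast
    ring

lemma Phi2_eq_Phi1_neg (m s τ z1 z2 t : ℂ) : Phi2 m s τ z1 z2 t = Phi1 m s τ (-z2) (-z1) t := by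
  rw [Phi1, Phi2]
  congr! 5 with j
  congr 1
  ring

lemma mockThetaHalf_inv (M : ℕ) (q x y : ℂ) :
    mockThetaHalf M q x⁻¹ y⁻¹ = -mockThetaHalf M q x y := by
  rw [mockThetaHalf, ← (Equiv.neg ℤ).tsum_eq, mockThetaHalf, ← tsum_neg]
  refine tsum_congr fun n ↦ ?_
  rw [Equiv.neg_apply, ← mul_inv, inv_pow, thetaTerm_inv_neg, zpow_neg, ← mul_inv,
    appellKernel_inv, mul_neg]

lemma Phi_half_eq_mockThetaHalf_add (M : ℕ) (τ z1 z2 : ℂ) :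
    Phi (M / 2) (1 / 2) (2 * τ) (2 * z1) (2 * z2) 0 =
      mockThetaHalf M (e2 τ) (e2 z1) (e2 z2) + mockThetaHalf M (e2 τ) (e2 z2) (e2 z1) := by
  rw [Phi, Phi2_eq_Phi1_neg, ← mul_neg, ← mul_neg, Phi1_half_eq_mockThetaHalf,
    Phi1_half_eq_mockThetaHalf, e2_neg, e2_neg, mockThetaHalf_inv, sub_neg_eq_add]

lemma jTheta_eq_signedTheta_div_pow (M : ℕ) (τ z1 z2 : ℂ) :
    jTheta 0 (M + 1) τ ((-(1 / 2) + M * (z1 - z2)) / (M + 1)) =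
      signedTheta (M + 1) (e2 τ) ((e2 z1 / e2 z2) ^ M) := by
  have h := jTheta_zero_div_eq_signedTheta M.succ_ne_zero τ (M * (z1 - z2) - 1)
  have he2 : e2 (M * (z1 - z2) - 1) = (e2 z1 / e2 z2) ^ M := by
    rw [e2, mul_sub_one, exp_sub, exp_two_pi_mul_I, div_one, e2, e2, ← exp_sub, ← exp_nat_mul]
    ring_nf
  rw [he2, Nat.cast_succ] at h
  rw [← h]
  ring_nf

lemma jTheta_eq_signedTheta_pow_mul_pow (M : ℕ) (τ z1 z2 : ℂ) :
    jTheta 0 (M + 1) τ ((1 / 2 + z1 - z2) / (M + 1) + z1 + z2) =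
      signedTheta (M + 1) (e2 τ) (e2 z1 ^ (M + 2) * e2 z2 ^ M) := by
  have hM : (M : ℂ) + 1 ≠ 0 := M.cast_add_one_ne_zero
  have h := jTheta_zero_div_eq_signedTheta M.succ_ne_zero τ ((M + 2) * z1 + M * z2)
  have he2 : e2 ((M + 2) * z1 + M * z2) = e2 z1 ^ (M + 2) * e2 z2 ^ M := by
    simp only [e2, ← exp_nat_mul, ← exp_add]
    push_cast
    ring_nf
  rw [he2, Nat.cast_succ] at h
  rw [← h]
  congr 1
  field_simp
  ring

lemma jTheta_neg_eq_signedTheta_pow_mul_pow (M : ℕ) (τ z1 z2 : ℂ) :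
    jTheta 0 (M + 1) τ ((1 / 2 + z1 - z2) / (M + 1) - z1 - z2) =
      signedTheta (M + 1) (e2 τ) (e2 z2 ^ (M + 2) * e2 z1 ^ M) := by
  rw [← signedTheta_inv, mul_inv, ← inv_pow, ← inv_pow, ← e2_neg, ← e2_neg,
    ← jTheta_eq_signedTheta_pow_mul_pow]
  ring_nf

lemma mumford_one_one_eq_mul_oddTheta (τ z : ℂ) :
    mumford 1 1 (2 * τ) (2 * z) = I * qpow τ (1 / 4) * oddTheta (e2 τ) (e2 z) := by
  have hI : I * qpow τ (1 / 4) = exp (Real.pi / 2 * I + 2 * Real.pi * I * τ * (1 / 4)) := by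
    rw [exp_add, exp_pi_div_two_mul_I, qpow]
  rw [mumford, oddTheta, hI, ← tsum_mul_left]
  refine tsum_congr fun n ↦ ?_
  rw [thetaCoeff, ← exp_pi_mul_I]
  simp only [e2, ← exp_int_mul, ← exp_add]
  congr 1
  push_cast
  ring

lemma eta_pow_three_eq_mul_eulerProduct (τ : ℂ) :
    eta (2 * τ) ^ 3 = qpow τ (1 / 4) * eulerProduct (e2 τ ^ 2) ^ 3 := by
  have heuler : ∏' n : ℕ, (1 - qpow (2 * τ) (n + 1)) = eulerProduct (e2 τ ^ 2) := by
    refine tprod_congr fun n ↦ congrArg (1 - ·) ?_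
    simp only [qpow, e2, ← exp_nat_mul]
    congr 1
    push_cast
    ring
  rw [eta, heuler, mul_pow]
  congr 1
  simp only [qpow, ← exp_nat_mul]
  congr 1
  push_cast
  ring

lemma eta_pow_three_div_mumford_eq_appellSum (hτ : 0 < τ.im) (h : ¬ InLattice (2 * τ) (2 * z)) :
    -I * eta (2 * τ) ^ 3 / mumford 1 1 (2 * τ) (2 * z) = appellSum (e2 τ) (e2 z) := by
  have hprod := appellSum_mul_oddTheta (e2_ne_zero τ) (norm_e2_lt_one hτ) (e2_ne_zero z)
    (e2_mul_e2_zpow_sq_ne_one h)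
  have heuler := pow_ne_zero 3 (eulerProduct_ne_zero (norm_sq_lt_one (norm_e2_lt_one hτ)))
  have htheta : oddTheta (e2 τ) (e2 z) ≠ 0 :=
    right_ne_zero_of_mul (hprod ▸ neg_ne_zero.2 heuler)
  have hqpow : qpow τ (1 / 4) ≠ 0 := exp_ne_zero _
  rw [mumford_one_one_eq_mul_oddTheta, eta_pow_three_eq_mul_eulerProduct, div_eq_iff
    (mul_ne_zero (mul_ne_zero I_ne_zero hqpow) htheta)]
  linear_combination -(I * qpow τ (1 / 4)) * hprod

lemma monomialTheta_eq_mul_jTheta (hM : M ≠ 0) (τ z1 z2 : ℂ) (e : ℤ) :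
    monomialTheta M (e2 τ) (e2 z1) (e2 z2) e =
      qpow τ (-e ^ 2 / (4 * M)) * exp (Real.pi * I * e * (z1 - z2)) *
        jTheta e M τ (z1 + z2) := by
  have hM' : (M : ℂ) ≠ 0 := Nat.cast_ne_zero.2 hM
  rw [monomialTheta, jTheta, ← tsum_mul_left]
  refine tsum_congr fun p ↦ ?_
  simp only [thetaTerm, e2, qpow, ← exp_int_mul, ← exp_nat_mul, ← exp_add]
  congr 1
  push_cast
  field_simp
  ring

end MultiplicativeVariables

section CorrectionTerms

variable {M : ℕ} {τ z1 z2 : ℂ}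

/-- The theta correction with index `j` and frequency `e`: all summands of both correction sums
of the main identity are, up to sign, of this form. -/
def correctionTerm (M : ℕ) (τ z1 z2 : ℂ) (j : ℕ) (e : ℤ) : ℂ :=
  (-1) ^ j * qpow τ ((M + 1) * j ^ 2 - (2 * M * j - e) ^ 2 / (4 * M)) *
    (exp (Real.pi * I * e * (z1 - z2)) + exp (-(Real.pi * I) * e * (z1 - z2))) *
    (jTheta (-e) M τ (z1 + z2) - jTheta e M τ (z1 + z2))

lemma rowPairSum_add_rowPairSum_swap (hM : M ≠ 0) (τ z1 z2 : ℂ) (j : ℕ) :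
    rowPairSum M (e2 τ) (e2 z1) (e2 z2) j + rowPairSum M (e2 τ) (e2 z2) (e2 z1) j =
      ∑ i ∈ Finset.range (M * j), correctionTerm M τ z1 z2 j (2 * i + 1) := by
  have hM' : (M : ℂ) ≠ 0 := Nat.cast_ne_zero.2 hM
  rw [rowPairSum, rowPairSum, ← mul_add, ← Finset.sum_add_distrib, Finset.mul_sum]
  refine Finset.sum_congr rfl fun i _ ↦ ?_
  generalize he : (2 * i + 1 : ℤ) = e
  have hqpow : qpow τ ((M + 1) * j ^ 2 - (2 * M * j - e) ^ 2 / (4 * M)) =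
      e2 τ ^ j ^ 2 * e2 τ ^ (j * (2 * i + 1)) * qpow τ (-e ^ 2 / (4 * M)) := by
    simp only [← he, e2, qpow, ← exp_nat_mul, ← exp_add]
    congr 1
    push_cast
    field_simp
    ring
  have hswap (c : ℂ) : Real.pi * I * c * (z2 - z1) = -(Real.pi * I) * c * (z1 - z2) := by ring
  have hneg : Real.pi * I * -e * (z1 - z2) = -(Real.pi * I) * e * (z1 - z2) := by ring
  have hneg' : -(Real.pi * I) * -e * (z1 - z2) = Real.pi * I * e * (z1 - z2) := by ring
  simp only [monomialTheta_eq_mul_jTheta hM, add_comm z2 z1, correctionTerm, hqpow, hswap,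
    Int.cast_neg, neg_sq, hneg, hneg']
  ring

theorem hasSum_correctionTerm (hM : M ≠ 0) (hτ : 0 < τ.im) (h1 : ¬ InLattice (2 * τ) (2 * z1))
    (h2 : ¬ InLattice (2 * τ) (2 * z2)) :
    HasSum (fun j : ℕ ↦
        ∑ i ∈ Finset.range (M * (j + 1)), correctionTerm M τ z1 z2 (j + 1) (2 * i + 1))
      (jTheta 0 (M + 1) τ ((-(1 / 2) + M * (z1 - z2)) / (M + 1)) *
          Phi (M / 2) (1 / 2) (2 * τ) (2 * z1) (2 * z2) 0 -
        -I * eta (2 * τ) ^ 3 *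
          (jTheta 0 (M + 1) τ ((1 / 2 + z1 - z2) / (M + 1) + z1 + z2) /
              mumford 1 1 (2 * τ) (2 * z1) +
            jTheta 0 (M + 1) τ ((1 / 2 + z1 - z2) / (M + 1) - z1 - z2) /
              mumford 1 1 (2 * τ) (2 * z2))) := by
  have hsum := (hasSum_rowPairSum hM (e2_ne_zero τ) (norm_e2_lt_one hτ) (e2_ne_zero z1)
    (e2_ne_zero z2) (e2_mul_e2_zpow_sq_ne_one h1)).add
    (hasSum_rowPairSum hM (e2_ne_zero τ) (norm_e2_lt_one hτ) (e2_ne_zero z2) (e2_ne_zero z1)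
      (e2_mul_e2_zpow_sq_ne_one h2))
  simp only [rowPairSum_add_rowPairSum_swap hM] at hsum
  have hswap : signedTheta (M + 1) (e2 τ) ((e2 z2 / e2 z1) ^ M) =
      signedTheta (M + 1) (e2 τ) ((e2 z1 / e2 z2) ^ M) := by
    rw [← inv_div, inv_pow, signedTheta_inv]
  rw [hswap] at hsum
  rw [jTheta_eq_signedTheta_div_pow, jTheta_eq_signedTheta_pow_mul_pow,
    jTheta_neg_eq_signedTheta_pow_mul_pow, Phi_half_eq_mockThetaHalf_add]
  convert hsum using 1
  rw [← eta_pow_three_div_mumford_eq_appellSum hτ h1,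
    ← eta_pow_three_div_mumford_eq_appellSum hτ h2]
  ring

end CorrectionTerms

section FrequencyReduction

variable {M : ℕ} {τ z1 z2 : ℂ}

lemma jTheta_periodic {m : ℂ} (hm : m ≠ 0) (τ z : ℂ) :
    Function.Periodic (fun k ↦ jTheta k m τ z) (2 * m) := by
  intro k
  simp only [jTheta]
  rw [← (Equiv.subRight 1).tsum_eq]
  refine tsum_congr fun j ↦ ?_
  have hshift : (((Equiv.subRight 1) j : ℤ) : ℂ) + (k + 2 * m) / (2 * m) = j + k / (2 * m) := by
    rw [Equiv.subRight_apply]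
    push_cast
    field_simp
    ring
  rw [hshift]

lemma jTheta_two_mul_mul_add (hM : M ≠ 0) (τ z k : ℂ) (r : ℤ) :
    jTheta (2 * M * r + k) M τ z = jTheta k M τ z := by
  rw [add_comm, mul_comm (2 * (M : ℂ))]
  exact (jTheta_periodic (Nat.cast_ne_zero.2 hM) τ z).int_mul r k

lemma correctionTerm_two_mul_mul_add (hM : M ≠ 0) (τ z1 z2 : ℂ) (j : ℕ) (r k : ℤ) :
    correctionTerm M τ z1 z2 j (2 * M * r + k) =
      (-1) ^ j * qpow τ ((M + 1) * j ^ 2 - (2 * M * (j - r) - k) ^ 2 / (4 * M)) *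
        (exp (Real.pi * I * (2 * M * r + k) * (z1 - z2)) +
          exp (-(Real.pi * I) * (2 * M * r + k) * (z1 - z2))) *
        (jTheta (-k) M τ (z1 + z2) - jTheta k M τ (z1 + z2)) := by
  have hneg : (-(2 * M * r + k) : ℂ) = 2 * M * (-r : ℤ) + -k := by
    push_cast
    ring
  rw [correctionTerm]
  push_cast
  rw [hneg, jTheta_two_mul_mul_add hM, jTheta_two_mul_mul_add hM, mul_sub (2 * (M : ℂ)), sub_sub]

lemma correctionTerm_two_mul_mul_add_natCast (hM : M ≠ 0) (τ z1 z2 : ℂ) (j r k : ℕ) :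
    correctionTerm M τ z1 z2 j (2 * M * r + k) =
      -((-1) ^ j * qpow τ ((M + 1) * j ^ 2 - (2 * M * (j - r) - k) ^ 2 / (4 * M)) *
        (exp (Real.pi * I * (2 * M * r + k) * (z1 - z2)) +
          exp (-(Real.pi * I) * (2 * M * r + k) * (z1 - z2))) *
        (jTheta k M τ (z1 + z2) - jTheta (-k) M τ (z1 + z2))) := by
  rw [correctionTerm_two_mul_mul_add hM, Int.cast_natCast, Int.cast_natCast]
  ring

lemma correctionTerm_two_mul_mul_sub_natCast (hM : M ≠ 0) (τ z1 z2 : ℂ) (j r k : ℕ) :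
    correctionTerm M τ z1 z2 j (2 * M * r - k) =
      (-1) ^ j * qpow τ ((M + 1) * j ^ 2 - (2 * M * (j - r) + k) ^ 2 / (4 * M)) *
        (exp (Real.pi * I * (2 * M * r - k) * (z1 - z2)) +
          exp (-(Real.pi * I) * (2 * M * r - k) * (z1 - z2))) *
        (jTheta k M τ (z1 + z2) - jTheta (-k) M τ (z1 + z2)) := by
  rw [sub_eq_add_neg, correctionTerm_two_mul_mul_add hM]
  simp only [Int.cast_neg, Int.cast_natCast, sub_neg_eq_add, neg_neg, ← sub_eq_add_neg]

lemma correctionTerm_two_mul_mul_add_self (hM : M ≠ 0) (τ z1 z2 : ℂ) (j : ℕ) (r : ℤ) :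
    correctionTerm M τ z1 z2 j (2 * M * r + M) = 0 := by
  have h := jTheta_two_mul_mul_add hM τ (z1 + z2) (-M) 1
  rw [Int.cast_one, mul_one, two_mul, add_neg_cancel_right] at h
  rw [correctionTerm_two_mul_mul_add hM, Int.cast_natCast, h, sub_self, mul_zero]

end FrequencyReduction

section Reindexing

variable {A : Type*} [AddCommMonoid A] {M : ℕ}

lemma sum_range_odd_eq_sum_reflect_add_sum {f : ℤ → A} (hM : M ≠ 0) (hf : f M = 0) :
    ∑ i ∈ Finset.range M, f (2 * i + 1) =
      ∑ k ∈ Finset.Icc 1 (M - 1) with Odd k, f (2 * M - k) +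
        ∑ k ∈ Finset.Icc 1 (M - 1) with Odd k, f k := by
  have hodd : ∑ i ∈ Finset.range M, f (2 * i + 1) =
      ∑ k ∈ Finset.range (2 * M) with Odd k, f k := by
    refine Finset.sum_nbij' (2 * · + 1) (· / 2) ?_ ?_ ?_ ?_ ?_ <;> grind
  have hlow : Finset.filter (· < M) {k ∈ Finset.range (2 * M) | Odd k} =
      {k ∈ Finset.Icc 1 (M - 1) | Odd k} := by
    grind
  have hhigh : ∑ k ∈ Finset.Icc 1 (M - 1) with Odd k, f (2 * M - k) =
      ∑ k ∈ {k ∈ Finset.range (2 * M) | Odd k} with ¬ k < M, f k := by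
    refine Finset.sum_of_injOn (2 * M - ·) ?_ ?_ ?_ ?_
    · grind [Set.InjOn]
    · grind [Set.MapsTo]
    · intro k hk hk'
      obtain rfl : k = M := by
        by_contra hne
        exact hk' ⟨2 * M - k, by grind, by grind⟩
      exact hf
    · grind
  rw [hodd, hhigh, ← hlow, add_comm, Finset.sum_filter_add_sum_filter_not]

lemma sum_range_mul_odd_eq_sum_sub_add_sum_add {f : ℤ → A} (hM : M ≠ 0)
    (hf : ∀ r : ℤ, f (2 * M * r + M) = 0) (j : ℕ) :
    ∑ i ∈ Finset.range (M * j), f (2 * i + 1) =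
      ∑ r ∈ Finset.Icc 1 j, ∑ k ∈ Finset.Icc 1 (M - 1) with Odd k, f (2 * M * r - k) +
        ∑ r ∈ Finset.range j, ∑ k ∈ Finset.Icc 1 (M - 1) with Odd k, f (2 * M * r + k) := by
  induction j with
  | zero => simp
  | succ j ih =>
    have hblock := sum_range_odd_eq_sum_reflect_add_sum
      (f := fun e ↦ f (2 * M * j + e)) hM (hf j)
    have hfirst : ∑ i ∈ Finset.range M, f (2 * ((M * j + i : ℕ) : ℤ) + 1) =
        ∑ i ∈ Finset.range M, f (2 * M * j + (2 * i + 1)) :=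
      Finset.sum_congr rfl fun i _ ↦ congrArg f (by push_cast; ring)
    have hreflect : ∑ k ∈ Finset.Icc 1 (M - 1) with Odd k, f (2 * M * ((j + 1 : ℕ) : ℤ) - k) =
        ∑ k ∈ Finset.Icc 1 (M - 1) with Odd k, f (2 * M * j + (2 * M - k)) :=
      Finset.sum_congr rfl fun k _ ↦ congrArg f (by push_cast; ring)
    rw [Nat.mul_succ, Finset.sum_range_add, ih, Finset.sum_Icc_succ_top (by lia),
      Finset.sum_range_succ, hfirst, hblock, hreflect, add_add_add_comm]

end Reindexing

section Summability

variable {M : ℕ} {τ : ℂ}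

lemma exists_norm_jTheta_intCast_le (hM : M ≠ 0) (τ z : ℂ) :
    ∃ B : ℝ, ∀ e : ℤ, ‖jTheta e M τ z‖ ≤ B := by
  obtain ⟨B, hB⟩ :=
    ((Set.finite_Ico (0 : ℤ) (2 * M)).image fun e : ℤ ↦ ‖jTheta e M τ z‖).bddAbove
  have hpos : (0 : ℤ) < 2 * M := by positivity
  refine ⟨B, fun e ↦ ?_⟩
  have hmod := jTheta_two_mul_mul_add hM τ z (e % (2 * M) : ℤ) (e / (2 * M))
  norm_cast at hmod
  rw [Int.mul_ediv_add_emod] at hmod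
  rw [hmod]
  exact hB ⟨_, ⟨Int.emod_nonneg e hpos.ne', Int.emod_lt_of_pos e hpos⟩, rfl⟩

lemma norm_exp_mul_le {c : ℂ} (hc : ‖c‖ = Real.pi) (z : ℂ) {e : ℤ} {N : ℕ} (h0 : 0 ≤ e)
    (hN : e ≤ N) : ‖exp (c * e * z)‖ ≤ Real.exp (Real.pi * ‖z‖) ^ N := by
  have hN' : (e : ℝ) ≤ N := by exact_mod_cast hN
  refine (norm_exp_le_exp_norm _).trans ?_
  rw [← Real.exp_nat_mul, Real.exp_le_exp, norm_mul, norm_mul, hc, norm_intCast,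
    abs_of_nonneg (by exact_mod_cast h0), mul_comm Real.pi, mul_assoc]
  gcongr

lemma norm_qpow_le (hM : M ≠ 0) (hτ : 0 < τ.im) {j : ℕ} {e : ℤ} (h0 : 0 ≤ e)
    (hj : e ≤ 2 * M * j) :
    ‖qpow τ ((M + 1) * j ^ 2 - (2 * M * j - e) ^ 2 / (4 * M))‖ ≤ ‖e2 τ‖ ^ j ^ 2 := by
  have h0' : (0 : ℝ) ≤ e := by exact_mod_cast h0
  have hj' : (e : ℝ) ≤ 2 * M * j := by exact_mod_cast hj
  have hexponent : (j : ℝ) ^ 2 ≤ (M + 1) * j ^ 2 - (2 * M * j - e) ^ 2 / (4 * M) := by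
    rw [le_sub_iff_add_le, ← le_sub_iff_add_le', div_le_iff₀ (by positivity)]
    nlinarith
  have hcast : ((M + 1) * j ^ 2 - (2 * M * j - e) ^ 2 / (4 * M) : ℂ) =
      ((M + 1) * j ^ 2 - (2 * M * j - e) ^ 2 / (4 * M) : ℝ) := by
    push_cast
    rfl
  have hre : (2 * Real.pi * I * τ).re = -(2 * Real.pi * τ.im) := by simp
  rw [qpow, e2, norm_exp, norm_exp, ← Real.exp_nat_mul, Real.exp_le_exp, hcast, re_mul_ofReal, hre,
    mul_comm, Nat.cast_pow]
  exact mul_le_mul_of_nonpos_right hexponent (neg_nonpos.2 (by positivity))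

lemma exists_norm_correctionTerm_le (hM : M ≠ 0) (hτ : 0 < τ.im) (z1 z2 : ℂ) :
    ∃ B S : ℝ, 0 < S ∧ ∀ (j : ℕ) (e : ℤ), 0 ≤ e → e ≤ 2 * M * j →
      ‖correctionTerm M τ z1 z2 j e‖ ≤ B * (S ^ j * ‖e2 τ‖ ^ j ^ 2) := by
  obtain ⟨B, hB⟩ := exists_norm_jTheta_intCast_le hM τ (z1 + z2)
  refine ⟨4 * B, Real.exp (Real.pi * ‖z1 - z2‖) ^ (2 * M), by positivity, fun j e h0 hj ↦ ?_⟩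
  have hpi : ‖Real.pi * I‖ = Real.pi := by simp [abs_of_pos Real.pi_pos]
  have hexp {c : ℂ} (hc : ‖c‖ = Real.pi) := norm_exp_mul_le hc (z1 - z2) (N := 2 * M * j) h0
    (by exact_mod_cast hj)
  have hpair : ‖exp (Real.pi * I * e * (z1 - z2)) + exp (-(Real.pi * I) * e * (z1 - z2))‖ ≤
      2 * Real.exp (Real.pi * ‖z1 - z2‖) ^ (2 * M * j) := by
    rw [two_mul]
    exact norm_add_le_of_le (hexp hpi) (hexp (by rw [norm_neg, hpi]))
  have htheta : ‖jTheta (-e) M τ (z1 + z2) - jTheta e M τ (z1 + z2)‖ ≤ 2 * B := by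
    rw [two_mul]
    exact norm_sub_le_of_le (by exact_mod_cast hB (-e)) (hB e)
  rw [correctionTerm, norm_mul, norm_mul, norm_mul, norm_pow, norm_neg, norm_one, one_pow, one_mul]
  calc _ ≤ ‖e2 τ‖ ^ j ^ 2 * (2 * Real.exp (Real.pi * ‖z1 - z2‖) ^ (2 * M * j)) * (2 * B) := by
        gcongr
        exact norm_qpow_le hM hτ h0 hj
    _ = 4 * B * ((Real.exp (Real.pi * ‖z1 - z2‖) ^ (2 * M)) ^ j * ‖e2 τ‖ ^ j ^ 2) := by
        rw [pow_mul _ (2 * M)]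
        ring

lemma summable_sum_norm_correctionTerm (hM : M ≠ 0) (hτ : 0 < τ.im) (z1 z2 : ℂ) :
    Summable fun j : ℕ ↦ ∑ i ∈ Finset.range (M * (j + 1)),
      ‖correctionTerm M τ z1 z2 (j + 1) (2 * i + 1)‖ := by
  obtain ⟨B, S, hS, hB⟩ := exists_norm_correctionTerm_le hM hτ z1 z2
  have hgauss : Summable fun j : ℕ ↦ ((j + 1 : ℕ) : ℝ) * (S ^ (j + 1) * ‖e2 τ‖ ^ (j + 1) ^ 2) := by
    have h := (summable_abs_pow_mul_zpow_mul_zpow_sq (norm_pos_iff.2 (e2_ne_zero τ))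
      (norm_e2_lt_one hτ) hS 1).comp_injective (Nat.cast_injective.comp (add_left_injective 1))
    refine h.congr fun j ↦ ?_
    simp only [Function.comp_apply, Int.cast_natCast, Nat.abs_cast, pow_one, zpow_natCast,
      ← Nat.cast_pow]
  refine Summable.of_nonneg_of_le (fun j ↦ by positivity) (fun j ↦ ?_) (hgauss.mul_left (M * B))
  calc _ ≤ (Finset.range (M * (j + 1))).card • (B * (S ^ (j + 1) * ‖e2 τ‖ ^ (j + 1) ^ 2)) := by
        refine Finset.sum_le_card_nsmul _ _ _ fun i hi ↦ hB _ _ (by positivity) ?_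
        have hi' := Finset.mem_range.1 hi
        zify at hi'
        push_cast
        lia
    _ = M * B * (((j + 1 : ℕ) : ℝ) * (S ^ (j + 1) * ‖e2 τ‖ ^ (j + 1) ^ 2)) := by
        rw [Finset.card_range, nsmul_eq_mul]
        push_cast
        ring

lemma sum_norm_correctionTerm_eq (hM : M ≠ 0) (τ z1 z2 : ℂ) (j : ℕ) :
    ∑ i ∈ Finset.range (M * j), ‖correctionTerm M τ z1 z2 j (2 * i + 1)‖ =
      ∑ r ∈ Finset.Icc 1 j, ∑ k ∈ Finset.Icc 1 (M - 1) with Odd k,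
          ‖correctionTerm M τ z1 z2 j (2 * M * r - k)‖ +
        ∑ r ∈ Finset.range j, ∑ k ∈ Finset.Icc 1 (M - 1) with Odd k,
          ‖correctionTerm M τ z1 z2 j (2 * M * r + k)‖ :=
  sum_range_mul_odd_eq_sum_sub_add_sum_add (f := fun e ↦ ‖correctionTerm M τ z1 z2 j e‖) hM
    (fun r ↦ by rw [correctionTerm_two_mul_mul_add_self hM, norm_zero]) j

lemma summable_correctionTerm_sub (hM : M ≠ 0) (hτ : 0 < τ.im) (z1 z2 : ℂ) :
    Summable fun j : ℕ ↦ ∑ r ∈ Finset.Icc 1 (j + 1), ∑ k ∈ Finset.Icc 1 (M - 1) with Odd k,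
      correctionTerm M τ z1 z2 (j + 1) (2 * M * r - k) := by
  refine (summable_sum_norm_correctionTerm hM hτ z1 z2).of_norm_bounded fun j ↦ ?_
  rw [sum_norm_correctionTerm_eq hM]
  exact (norm_sum_le_of_le _ fun r _ ↦ norm_sum_le _ _).trans
    (le_add_of_nonneg_right (by positivity))

lemma summable_correctionTerm_add (hM : M ≠ 0) (hτ : 0 < τ.im) (z1 z2 : ℂ) :
    Summable fun j : ℕ ↦ ∑ r ∈ Finset.range (j + 1), ∑ k ∈ Finset.Icc 1 (M - 1) with Odd k,
      correctionTerm M τ z1 z2 (j + 1) (2 * M * r + k) := by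
  refine (summable_sum_norm_correctionTerm hM hτ z1 z2).of_norm_bounded fun j ↦ ?_
  rw [sum_norm_correctionTerm_eq hM]
  exact (norm_sum_le_of_le _ fun r _ ↦ norm_sum_le _ _).trans
    (le_add_of_nonneg_left (by positivity))

lemma tsum_correctionTerm (hM : M ≠ 0) (hτ : 0 < τ.im) (z1 z2 : ℂ) :
    ∑' j : ℕ, ∑ i ∈ Finset.range (M * (j + 1)), correctionTerm M τ z1 z2 (j + 1) (2 * i + 1) =
      (∑' j : ℕ, ∑ r ∈ Finset.Icc 1 (j + 1), ∑ k ∈ Finset.Icc 1 (M - 1) with Odd k,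
          correctionTerm M τ z1 z2 (j + 1) (2 * M * r - k)) +
        ∑' j : ℕ, ∑ r ∈ Finset.range (j + 1), ∑ k ∈ Finset.Icc 1 (M - 1) with Odd k,
          correctionTerm M τ z1 z2 (j + 1) (2 * M * r + k) := by
  rw [← (summable_correctionTerm_sub hM hτ z1 z2).tsum_add
    (summable_correctionTerm_add hM hτ z1 z2)]
  exact tsum_congr fun j ↦ sum_range_mul_odd_eq_sum_sub_add_sum_add hM
    (correctionTerm_two_mul_mul_add_self hM τ z1 z2 (j + 1)) (j + 1)

end Summability

theorem statement13 (m : ℝ) (M : ℕ) (hM : 0 < M) (hm : m = M / 2)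
    (τ : ℂ) (hτ : 0 < τ.im) (z1 z2 : ℂ)
    (h1 : ¬ InLattice (2 * τ) (2 * z1)) (h2 : ¬ InLattice (2 * τ) (2 * z2)) :
    jTheta 0 (2 * (m : ℂ) + 1) τ
          ((-(1 / 2) + 2 * (m : ℂ) * (z1 - z2)) / (2 * (m : ℂ) + 1)) *
        Phi (m : ℂ) (1 / 2) (2 * τ) (2 * z1) (2 * z2) 0 =
      -Complex.I * eta (2 * τ) ^ 3 *
          (jTheta 0 (2 * (m : ℂ) + 1) τ
              ((1 / 2 + z1 - z2) / (2 * (m : ℂ) + 1) + z1 + z2) /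
              mumford 1 1 (2 * τ) (2 * z1) +
            jTheta 0 (2 * (m : ℂ) + 1) τ
              ((1 / 2 + z1 - z2) / (2 * (m : ℂ) + 1) - z1 - z2) /
              mumford 1 1 (2 * τ) (2 * z2)) +
        (∑' j : ℕ, ∑ r ∈ Finset.Icc 1 (j + 1),
          ∑ k ∈ (Finset.Icc 1 (M - 1)).filter (fun k => Odd k),
            (-1 : ℂ) ^ (j + 1) *
              qpow τ ((2 * (m : ℂ) + 1) * ((j : ℂ) + 1) ^ 2 -
                (4 * (m : ℂ) * ((j : ℂ) + 1 - (r : ℂ)) + (k : ℂ)) ^ 2 / (8 * (m : ℂ))) *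
              (Complex.exp (Real.pi * Complex.I *
                  (4 * (m : ℂ) * (r : ℂ) - (k : ℂ)) * (z1 - z2)) +
                Complex.exp (-(Real.pi * Complex.I) *
                  (4 * (m : ℂ) * (r : ℂ) - (k : ℂ)) * (z1 - z2))) *
              (jTheta (k : ℂ) (2 * (m : ℂ)) τ (z1 + z2) -
                jTheta (-(k : ℂ)) (2 * (m : ℂ)) τ (z1 + z2))) -
        (∑' j : ℕ, ∑ r ∈ Finset.range (j + 1),
          ∑ k ∈ (Finset.Icc 1 (M - 1)).filter (fun k => Odd k),
            (-1 : ℂ) ^ (j + 1) *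
              qpow τ ((2 * (m : ℂ) + 1) * ((j : ℂ) + 1) ^ 2 -
                (4 * (m : ℂ) * ((j : ℂ) + 1 - (r : ℂ)) - (k : ℂ)) ^ 2 / (8 * (m : ℂ))) *
              (Complex.exp (Real.pi * Complex.I *
                  (4 * (m : ℂ) * (r : ℂ) + (k : ℂ)) * (z1 - z2)) +
                Complex.exp (-(Real.pi * Complex.I) *
                  (4 * (m : ℂ) * (r : ℂ) + (k : ℂ)) * (z1 - z2))) *
              (jTheta (k : ℂ) (2 * (m : ℂ)) τ (z1 + z2) -
                jTheta (-(k : ℂ)) (2 * (m : ℂ)) τ (z1 + z2))) := by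
  have hM0 : M ≠ 0 := hM.ne'
  have hm1 : (m : ℂ) = M / 2 := by rw [hm, ofReal_div, ofReal_natCast, ofReal_ofNat]
  have hm2 : 2 * (m : ℂ) = M := by rw [hm1, mul_div_cancel₀ _ two_ne_zero]
  have hm4 : 4 * (m : ℂ) = 2 * M := by linear_combination 2 * hm2
  have hm8 : 8 * (m : ℂ) = 4 * M := by linear_combination 4 * hm2
  rw [hm8, hm4, hm2, hm1]
  have hsum := (hasSum_correctionTerm hM0 hτ h1 h2).tsum_eq
  rw [tsum_correctionTerm hM0 hτ] at hsum
  simp only [correctionTerm_two_mul_mul_sub_natCast hM0,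
    correctionTerm_two_mul_mul_add_natCast hM0, Finset.sum_neg_distrib, tsum_neg, Nat.cast_add,
    Nat.cast_one] at hsum
  linear_combination -hsum

end Wakimoto
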